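/- There exists an absolute constant C > 0 with the following property. For every measurable μ : ℂ → ℂ vanishing outside the lower half-plane {ζ : Im ζ < 0} and satisfying |μ| ≤ 1 a.e., every real n ≥ 2, every α ≥ 1, and every box B of type (n, α) in the upper half-plane, one has ⨍_B (2 Im(z)|Tμ(z)|)² dA(z)/Im z ≤ Σ²_ℍ + C/log n. -/

import Mathlib

open Complex MeasureTheory Filter Topology Set

/-- The derivative of the Beurling transform of `μ`:
`Tμ(z) = -(2/π) ∫_{Im ζ < 0} μ(ζ)/(ζ−z)³ dA(ζ)`. -/
noncomputable def Tderiv (μ : ℂ → ℂ) (z : ℂ) : ℂ :=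
  -(2 / (Real.pi : ℂ)) * ∫ ζ in {ζ : ℂ | ζ.im < 0}, μ ζ / (ζ - z)^3

/-- The modified Beurling transform
`S^#μ(z) = -(1/π) ∫_{Im ζ<0} μ(ζ)[(ζ−z)⁻² − ζ⁻²] dA(ζ)`. -/
noncomputable def Ssharp (μ : ℂ → ℂ) (z : ℂ) : ℂ :=
  -(1 / (Real.pi : ℂ)) * ∫ ζ in {ζ : ℂ | ζ.im < 0}, μ ζ * (((ζ - z)^2)⁻¹ - (ζ^2)⁻¹)

/-- The asymptotic variance over `[0,1]` of a function on the upper half-plane: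
`σ²_{[0,1]}(b) = limsup_{y→0⁺} (1/log(1/y)) ∫₀¹ |b(x+iy)|² dx`. -/
noncomputable def sigma01 (b : ℂ → ℂ) : ℝ :=
  Filter.limsup (fun y : ℝ =>
    (1 / Real.log (1 / y)) *
      ∫ x in (0:ℝ)..1, ‖b ((x : ℂ) + (y : ℂ) * Complex.I)‖^2) (𝓝[>] (0:ℝ))

/-- `Σ²_ℍ`: the supremum of `σ²_{[0,1]}(S^#μ)` over all measurable `μ` with
`|μ| ≤ 1` a.e. supported in the lower half-plane. -/
noncomputable def SigmaSqH : ℝ :=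
  sSup {v : ℝ | ∃ μ : ℂ → ℂ, Measurable μ ∧ (∀ᵐ ζ : ℂ, ‖μ ζ‖ ≤ 1) ∧
    (∀ ζ : ℂ, 0 ≤ ζ.im → μ ζ = 0) ∧ v = sigma01 (Ssharp μ)}

/-!
For a Bloch function `b`, Green's formula shows that `∫₀¹ |b(x + iy)|² dx` differs by a bounded
amount from the energy `∫ (2 Im z |b'(z)|)² dA(z) / Im z` over `[0, 1] × [y, 1]`, so `σ²_{[0,1]}(b)`
is read off from energies. By affine invariance the given box may be taken to be
`[0, 1] × [β/m, β]` with `β = 1/α ≤ 1`, at the cost of rounding `n` up to an integer `m`.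

Repeat the reflected restriction of `μ` to this box self-similarly, in `m ^ k` boxes of size `m⁻ᵏ`
for every `k`. The kernel `|ζ - z|⁻³` decays fast enough for `Tμ` on a box to depend, up to an error
in energy comparable to the width of the box, only on `μ` on the reflected box. Hence each box
reproduces the energy of the given one up to a relative error `O(1 / log m)`, and the asymptotic
variance of the self-similar coefficient, which is at most `Σ²_ℍ`, is at least the average over the
given box minus `O(1 / log m)`.
-/

open scoped ComplexConjugate
open UpperHalfPlane (upperHalfPlaneSet isOpen_upperHalfPlaneSet)

/-! ### Integration over rectangles in `ℂ` -/

section Rectangle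

theorem measurableSet_reProdIm {s t : Set ℝ} (hs : MeasurableSet s) (ht : MeasurableSet t) :
    MeasurableSet (s ×ℂ t) :=
  (measurable_re hs).inter (measurable_im ht)

theorem integrableOn_reProdIm_mul {R : Type*} [NormedRing R] {f g : ℝ → R} {s t : Set ℝ}
    (hf : IntegrableOn f s) (hg : IntegrableOn g t) :
    IntegrableOn (fun z : ℂ => f z.re * g z.im) (s ×ℂ t) := by
  have hprod := Integrable.mul_prod hf hg
  rw [Measure.prod_restrict] at hprod
  exact (volume_preserving_equiv_real_prod.integrableOn_comp_preimage
    measurableEquivRealProd.measurableEmbedding).2 hprod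

theorem setIntegral_reProdIm_mul {𝕜 : Type*} [RCLike 𝕜] (f g : ℝ → 𝕜) (s t : Set ℝ) :
    ∫ z in s ×ℂ t, f z.re * g z.im = (∫ x in s, f x) * ∫ y in t, g y := by
  rw [← setIntegral_prod_mul f g s t]
  exact volume_preserving_equiv_real_prod.setIntegral_preimage_emb
    measurableEquivRealProd.measurableEmbedding (fun p : ℝ × ℝ => f p.1 * g p.2) (s ×ˢ t)

theorem reProdIm_Ioo_ae_eq_Icc (a b c d : ℝ) :
    (Ioo a b ×ℂ Ioo c d : Set ℂ) =ᵐ[volume] Icc a b ×ℂ Icc c d :=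
  volume_preserving_equiv_real_prod.quasiMeasurePreserving.preimage_ae_eq
    (Measure.set_prod_ae_eq Ioo_ae_eq_Icc Ioo_ae_eq_Icc)

theorem integral_divergence_reProdIm {E : Type*} [NormedAddCommGroup E] [NormedSpace ℝ E]
    {P Q : ℂ → E} {P' Q' : ℂ → ℂ →L[ℝ] E} {a b c d : ℝ} (hab : a ≤ b) (hcd : c ≤ d)
    (hP : ∀ z ∈ Icc a b ×ℂ Icc c d, HasFDerivAt P (P' z) z)
    (hQ : ∀ z ∈ Icc a b ×ℂ Icc c d, HasFDerivAt Q (Q' z) z)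
    (hi : IntegrableOn (fun z => P' z 1 + Q' z I) (Icc a b ×ℂ Icc c d)) :
    ∫ z in Icc a b ×ℂ Icc c d, (P' z 1 + Q' z I) =
      (∫ x in a..b, Q (x + d * I)) - (∫ x in a..b, Q (x + c * I)) +
        (∫ y in c..d, P (b + y * I)) - ∫ y in c..d, P (a + y * I) := by
  have hIcc : Icc (a, c) (b, d) = Icc a b ×ˢ Icc c d := (Icc_prod_eq _ _)
  let e : (ℝ × ℝ) ≃L[ℝ] ℂ := equivRealProdCLM.symm
  have he : ∀ p : ℝ × ℝ, e p = p.1 + p.2 * I := equivRealProd_symm_apply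
  have hmem : ∀ p ∈ Icc (a, c) (b, d), e p ∈ Icc a b ×ℂ Icc c d := fun p hp => by
    rwa [hIcc] at hp
  have hcomp : ∀ {F : ℂ → E} {F' : ℂ → ℂ →L[ℝ] E},
      (∀ z ∈ Icc a b ×ℂ Icc c d, HasFDerivAt F (F' z) z) →
      ∀ p ∈ Icc (a, c) (b, d), HasFDerivAt (F ∘ e) ((F' (e p)).comp (e : (ℝ × ℝ) →L[ℝ] ℂ)) p :=
    fun hF p hp => (hF (e p) (hmem p hp)).comp p e.hasFDerivAt
  have hsub : Ioo a b ×ˢ Ioo c d ⊆ Icc (a, c) (b, d) :=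
    hIcc ▸ prod_mono Ioo_subset_Icc_self Ioo_subset_Icc_self
  have he1 : e (1, 0) = 1 := by simp [he]
  have heI : e (0, 1) = I := by simp [he]
  have hpre : (Icc a b ×ℂ Icc c d : Set ℂ) = measurableEquivRealProd ⁻¹' Icc (a, c) (b, d) := by
    rw [hIcc]; rfl
  have hsymm : ∀ z : ℂ, e (z.re, z.im) = z := equivRealProdCLM.symm_apply_apply
  have key := integral_divergence_prod_Icc_of_hasFDerivAt_of_le (P ∘ e) (Q ∘ e)
    (fun p => (P' (e p)).comp (e : (ℝ × ℝ) →L[ℝ] ℂ))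
    (fun p => (Q' (e p)).comp (e : (ℝ × ℝ) →L[ℝ] ℂ)) (a, c) (b, d) ⟨hab, hcd⟩
    (fun p hp => (hcomp hP p hp).continuousAt.continuousWithinAt)
    (fun p hp => (hcomp hQ p hp).continuousAt.continuousWithinAt)
    (fun p hp => hcomp hP p (hsub hp)) (fun p hp => hcomp hQ p (hsub hp))
    (by
      rw [← volume_preserving_equiv_real_prod.integrableOn_comp_preimage
        measurableEquivRealProd.measurableEmbedding, ← hpre]
      simpa [Function.comp_def, he1, heI, hsymm] using hi)
  rw [← volume_preserving_equiv_real_prod.setIntegral_preimage_emb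
    measurableEquivRealProd.measurableEmbedding, ← hpre] at key
  simpa [he1, heI, hsymm, he] using key

end Rectangle

open scoped Pointwise in
theorem setIntegral_comp_smul_add {E F : Type*} [NormedAddCommGroup E] [NormedSpace ℝ E]
    [MeasurableSpace E] [BorelSpace E] [FiniteDimensional ℝ E] (μ : Measure E)
    [μ.IsAddHaarMeasure] [NormedAddCommGroup F] [NormedSpace ℝ F] (f : E → F) (s : Set E) {a : ℝ}
    (ha : a ≠ 0) (c : E) :
    ∫ x in (fun x => a • x + c) ⁻¹' s, f (a • x + c) ∂μ =
      |(a ^ Module.finrank ℝ E)⁻¹| • ∫ x in s, f x ∂μ := by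
  have hset : a • ((fun x => a • x + c) ⁻¹' s) = (· + c) ⁻¹' s := by
    ext x
    simp [mem_smul_set_iff_inv_smul_mem₀ ha, smul_inv_smul₀ ha]
  rw [Measure.setIntegral_comp_smul μ (fun x => f (x + c)) _ ha, hset,
    (measurePreserving_add_right μ c).setIntegral_preimage_emb (measurableEmbedding_addRight c)]

theorem setIntegral_comp_ofReal_mul_add {F : Type*} [NormedAddCommGroup F] [NormedSpace ℝ F]
    (f : ℂ → F) (s : Set ℂ) {a : ℝ} (ha : a ≠ 0) (c : ℂ) :
    ∫ z in (fun z : ℂ => a * z + c) ⁻¹' s, f (a * z + c) = (a ^ 2)⁻¹ • ∫ z in s, f z := by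
  simpa [finrank_real_complex, abs_of_nonneg (sq_nonneg a)] using
    setIntegral_comp_smul_add volume f s ha c

theorem setIntegral_union_le_of_nonneg {α : Type*} [MeasurableSpace α] {μ : Measure α} {f : α → ℝ}
    (s t : Set α) (hf : 0 ≤ f) (hs : IntegrableOn f s μ) (ht : IntegrableOn f t μ) :
    ∫ x in s ∪ t, f x ∂μ ≤ (∫ x in s, f x ∂μ) + ∫ x in t, f x ∂μ := by
  rw [← integral_add_measure hs ht]
  exact integral_mono_measure (Measure.restrict_union_le s t) (Eventually.of_forall hf)
    (integrable_add_measure.2 ⟨hs, ht⟩)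

/-! ### The energy density of a Bloch function -/

/-- The density `(2 Im z |g z|)² / Im z`. For `g = b'` with `b` holomorphic on the upper half-plane,
its integrals over boxes measure the growth of the quadratic means of `b` on horizontal lines. -/
noncomputable def blochEnergy (g : ℂ → ℂ) (z : ℂ) : ℝ := (2 * z.im * ‖g z‖) ^ 2 / z.im

section BlochEnergy

variable {g g₁ g₂ : ℂ → ℂ} {z : ℂ} {B a b c d : ℝ}

theorem blochEnergy_eq (g : ℂ → ℂ) (z : ℂ) : blochEnergy g z = 4 * z.im * ‖g z‖ ^ 2 := by
  unfold blochEnergy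
  rcases eq_or_ne z.im 0 with h | h
  · simp [h]
  · field_simp
    ring

theorem blochEnergy_nonneg (hz : 0 ≤ z.im) : 0 ≤ blochEnergy g z := by
  unfold blochEnergy
  positivity

theorem blochEnergy_le (hz : 0 < z.im) (hB : z.im * ‖g z‖ ≤ B) :
    blochEnergy g z ≤ 4 * B ^ 2 * z.im⁻¹ := by
  have hsq : (2 * z.im * ‖g z‖) ^ 2 ≤ (2 * B) ^ 2 := by
    rw [mul_assoc]
    gcongr
  rw [blochEnergy, div_eq_mul_inv]
  gcongr
  linarith

theorem blochEnergy_sub_le (hz : 0 < z.im) (h₁ : z.im * ‖g₁ z‖ ≤ B) (h₂ : z.im * ‖g₂ z‖ ≤ B) :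
    blochEnergy g₁ z - blochEnergy g₂ z ≤ 8 * B * ‖g₁ z - g₂ z‖ := by
  calc blochEnergy g₁ z - blochEnergy g₂ z
      = 4 * (z.im * (‖g₁ z‖ + ‖g₂ z‖)) * (‖g₁ z‖ - ‖g₂ z‖) := by
        rw [blochEnergy_eq, blochEnergy_eq]
        ring
    _ ≤ 4 * (z.im * (‖g₁ z‖ + ‖g₂ z‖)) * ‖g₁ z - g₂ z‖ := by
        gcongr
        exact norm_sub_norm_le _ _
    _ ≤ 4 * (2 * B) * ‖g₁ z - g₂ z‖ := by
        have : z.im * (‖g₁ z‖ + ‖g₂ z‖) ≤ 2 * B := by linarith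
        gcongr
    _ = 8 * B * ‖g₁ z - g₂ z‖ := by ring

theorem continuousOn_blochEnergy {s : Set ℂ} (hg : ContinuousOn g s) :
    ContinuousOn (blochEnergy g) s := by
  rw [funext (blochEnergy_eq g)]
  fun_prop

theorem reProdIm_subset_upperHalfPlaneSet {s t : Set ℝ} (ht : t ⊆ Ioi 0) :
    s ×ℂ t ⊆ upperHalfPlaneSet := fun _ hz => ht hz.2

theorem integrableOn_blochEnergy_Icc (hg : ContinuousOn g upperHalfPlaneSet) (hc : 0 < c) :
    IntegrableOn (blochEnergy g) (Icc a b ×ℂ Icc c d) :=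
  (continuousOn_blochEnergy (hg.mono (reProdIm_subset_upperHalfPlaneSet
    fun _ hy => hc.trans_le hy.1))).integrableOn_compact (isCompact_Icc.reProdIm isCompact_Icc)

theorem integrableOn_inv_im_Icc (hc : 0 < c) :
    IntegrableOn (fun z : ℂ => z.im⁻¹) (Icc a b ×ℂ Icc c d) :=
  ContinuousOn.integrableOn_compact (isCompact_Icc.reProdIm isCompact_Icc)
    (continuous_im.continuousOn.inv₀ fun _ hz => (hc.trans_le hz.2.1).ne')

theorem setIntegral_Icc_zpow_neg_two (ha : 0 < a) (hab : a ≤ b) :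
    ∫ x in Icc a b, x ^ (-2 : ℤ) = a⁻¹ - b⁻¹ := by
  rw [integral_Icc_eq_integral_Ioc, ← intervalIntegral.integral_of_le hab, integral_zpow (by
    rw [uIcc_of_le hab]
    exact .inr ⟨by norm_num, fun h => h.1.not_gt ha⟩)]
  norm_num
  ring

theorem setIntegral_inv_im_Icc (hab : a ≤ b) (hc : 0 < c) (hcd : c ≤ d) :
    ∫ z in Icc a b ×ℂ Icc c d, z.im⁻¹ = (b - a) * Real.log (d / c) := by
  have hlog : ∫ y in Icc c d, y⁻¹ = Real.log (d / c) := by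
    rw [integral_Icc_eq_integral_Ioc, ← intervalIntegral.integral_of_le hcd,
      integral_inv_of_pos hc (hc.trans_le hcd)]
  have hprod := setIntegral_reProdIm_mul (fun _ => (1 : ℝ)) (fun y => y⁻¹) (Icc a b) (Icc c d)
  simpa [hlog, hab] using hprod

theorem setIntegral_blochEnergy_le (hg : ContinuousOn g upperHalfPlaneSet)
    (hB : ∀ z : ℂ, 0 < z.im → z.im * ‖g z‖ ≤ B) (hab : a ≤ b) (hc : 0 < c) (hcd : c ≤ d) :
    ∫ z in Icc a b ×ℂ Icc c d, blochEnergy g z ≤ 4 * B ^ 2 * ((b - a) * Real.log (d / c)) := by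
  rw [← setIntegral_inv_im_Icc hab hc hcd, ← integral_const_mul]
  refine setIntegral_mono_on (integrableOn_blochEnergy_Icc hg hc)
    ((integrableOn_inv_im_Icc hc).const_mul _)
    (measurableSet_reProdIm measurableSet_Icc measurableSet_Icc) fun z hz => ?_
  have hz0 : 0 < z.im := hc.trans_le hz.2.1
  exact blochEnergy_le hz0 (hB z hz0)

end BlochEnergy

/-! ### Bloch functions and Green's formula -/

/-- `b` is holomorphic on the upper half-plane with Bloch bound `Im z |b'(z)| ≤ B`. -/
structure IsBloch (b : ℂ → ℂ) (B : ℝ) : Prop where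
  differentiableOn : DifferentiableOn ℂ b upperHalfPlaneSet
  im_mul_norm_deriv_le : ∀ z : ℂ, 0 < z.im → z.im * ‖deriv b z‖ ≤ B

section Flux

variable {b : ℂ → ℂ} {y : ℝ} {z : ℂ}

/-- The horizontal component of the vector field whose divergence is `4 (Im z - y) |b'(z)|²`, see
`fluxIm`. -/
noncomputable def fluxRe (b : ℂ → ℂ) (y : ℝ) (z : ℂ) : ℝ :=
  (z.im - y) * (2 * (deriv b z * conj (b z)).re)

/-- The vertical component of the field `(Im z - y) ∇|b|² - |b|² ∇(Im z - y)` of Green's formula; on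
the line `Im z = y` it is `-|b|²`. -/
noncomputable def fluxIm (b : ℂ → ℂ) (y : ℝ) (z : ℂ) : ℝ :=
  -((z.im - y) * (2 * (deriv b z * conj (b z)).im)) - ‖b z‖ ^ 2

theorem fluxIm_of_im_eq (b : ℂ → ℂ) (hz : z.im = y) : fluxIm b y z = -‖b z‖ ^ 2 := by
  simp [fluxIm, hz]

theorem exists_hasFDerivAt_flux (hb : DifferentiableOn ℂ b upperHalfPlaneSet) (y : ℝ)
    (hz : 0 < z.im) :
    ∃ P' Q' : ℂ →L[ℝ] ℝ, HasFDerivAt (fluxRe b y) P' z ∧ HasFDerivAt (fluxIm b y) Q' z ∧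
      P' 1 + Q' I = 4 * (z.im - y) * ‖deriv b z‖ ^ 2 := by
  have hnhds := isOpen_upperHalfPlaneSet.mem_nhds hz
  have hb' := (hb.differentiableAt hnhds).hasDerivAt.hasFDerivAt.restrictScalars ℝ
  have hg' := ((hb.deriv isOpen_upperHalfPlaneSet).differentiableAt
    hnhds).hasDerivAt.hasFDerivAt.restrictScalars ℝ
  have hconj := (conjCLE : ℂ →L[ℝ] ℂ).hasFDerivAt.comp z hb'
  have hprod := hg'.mul hconj
  have him := imCLM.hasFDerivAt (x := z) |>.sub_const y
  refine ⟨_, _, him.mul ((reCLM.hasFDerivAt.comp z hprod).const_mul 2),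
    (him.mul ((imCLM.hasFDerivAt.comp z hprod).const_mul 2)).neg.sub hb'.norm_sq, ?_⟩
  simp [Complex.inner, ← normSq_eq_norm_sq, normSq_apply]
  ring

theorem IsBloch.abs_weight_mul_le {B u : ℝ} (hb : IsBloch b B) (hy : 0 ≤ y) (hyz : y ≤ z.im)
    (hz : 0 < z.im) (hu : |u| ≤ ‖deriv b z * conj (b z)‖) :
    |(z.im - y) * (2 * u)| ≤ 2 * B * ‖b z‖ := by
  rw [norm_mul, RCLike.norm_conj] at hu
  calc |(z.im - y) * (2 * u)| = (z.im - y) * (2 * |u|) := by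
        rw [abs_mul, abs_mul, abs_of_nonneg (sub_nonneg.2 hyz), abs_two]
    _ ≤ z.im * (2 * (‖deriv b z‖ * ‖b z‖)) := by
        gcongr
        linarith
    _ = 2 * (z.im * ‖deriv b z‖) * ‖b z‖ := by ring
    _ ≤ 2 * B * ‖b z‖ := by
        gcongr
        exact hb.im_mul_norm_deriv_le z hz

theorem IsBloch.abs_fluxRe_le {B : ℝ} (hb : IsBloch b B) (hy : 0 ≤ y) (hyz : y ≤ z.im)
    (hz : 0 < z.im) : |fluxRe b y z| ≤ 2 * B * ‖b z‖ :=
  hb.abs_weight_mul_le hy hyz hz (abs_re_le_norm _)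

theorem IsBloch.abs_fluxIm_le {B : ℝ} (hb : IsBloch b B) (hy : 0 ≤ y) (hyz : y ≤ z.im)
    (hz : 0 < z.im) : |fluxIm b y z| ≤ 2 * B * ‖b z‖ + ‖b z‖ ^ 2 := by
  have hweight := hb.abs_weight_mul_le hy hyz hz (abs_im_le_norm _)
  refine (abs_sub _ _).trans (add_le_add ?_ ?_)
  · rwa [abs_neg]
  · rw [abs_of_nonneg (sq_nonneg _)]

end Flux

section Lines

variable {E : Type*} [TopologicalSpace E] {f : ℂ → E}

theorem continuousOn_vertical (hf : ContinuousOn f upperHalfPlaneSet) (x : ℝ) :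
    ContinuousOn (fun s : ℝ => f (x + s * I)) (Ioi 0) :=
  hf.comp (by fun_prop) fun s hs => by simpa using hs

theorem continuous_horizontal (hf : ContinuousOn f upperHalfPlaneSet) {y : ℝ} (hy : 0 < y) :
    Continuous fun x : ℝ => f (x + y * I) := by
  rw [← continuousOn_univ]
  exact hf.comp (by fun_prop) fun x _ => by simpa using hy

end Lines

namespace IsBloch

variable {b : ℂ → ℂ} {B x x₁ x₂ y s : ℝ} {z : ℂ}

theorem nonneg (hb : IsBloch b B) : 0 ≤ B :=
  (mul_nonneg (by simp) (norm_nonneg _)).trans (hb.im_mul_norm_deriv_le I (by simp))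

theorem norm_deriv_le (hb : IsBloch b B) (hz : 0 < z.im) : ‖deriv b z‖ ≤ B * z.im⁻¹ := by
  rw [← div_eq_mul_inv, le_div_iff₀ hz, mul_comm]
  exact hb.im_mul_norm_deriv_le z hz

theorem continuousOn_deriv (hb : IsBloch b B) : ContinuousOn (deriv b) upperHalfPlaneSet :=
  (hb.differentiableOn.deriv isOpen_upperHalfPlaneSet).continuousOn

theorem hasDerivAt_vertical (hb : IsBloch b B) (x : ℝ) (hs : 0 < s) :
    HasDerivAt (fun s : ℝ => b (x + s * I)) (deriv b (x + s * I) * I) s := by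
  have hline : HasDerivAt (fun s : ℂ => (x : ℂ) + s * I) I s := by
    simpa using ((hasDerivAt_id (s : ℂ)).mul_const I).const_add (x : ℂ)
  have hbs : HasDerivAt b (deriv b (x + s * I)) (x + s * I) :=
    (hb.differentiableOn.differentiableAt
      (isOpen_upperHalfPlaneSet.mem_nhds (by simpa using hs))).hasDerivAt
  exact (hbs.comp (s : ℂ) hline).comp_ofReal

theorem norm_le_norm_sub_log (hb : IsBloch b B) (x : ℝ) (hs : 0 < s) (hs1 : s ≤ 1) :
    ‖b (x + s * I)‖ ≤ ‖b (x + I)‖ - B * Real.log s := by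
  have hpos : uIcc s 1 ⊆ Ioi 0 := fun u hu => hs.trans_le (uIcc_of_le hs1 ▸ hu).1
  have hftc := intervalIntegral.integral_eq_sub_of_hasDerivAt
    (fun u hu => hb.hasDerivAt_vertical x (hpos hu))
    (((continuousOn_vertical hb.continuousOn_deriv x).mul
      continuousOn_const).mono hpos).intervalIntegrable
  have hbound : ‖∫ u in s..1, deriv b (x + u * I) * I‖ ≤ ∫ u in s..1, B * u⁻¹ := by
    refine intervalIntegral.norm_integral_le_of_norm_le hs1 (Eventually.of_forall fun u hu => ?_)
      (continuousOn_const.mul (continuousOn_inv₀.mono fun u hu =>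
        (hpos hu).ne')).intervalIntegrable
    simpa using hb.norm_deriv_le (z := x + u * I) (by simpa using hs.trans hu.1)
  rw [hftc, intervalIntegral.integral_const_mul, integral_inv_of_pos hs one_pos, one_div,
    Real.log_inv, ofReal_one, one_mul] at hbound
  linarith [norm_sub_norm_le (b (x + s * I)) (b (x + I)),
    norm_sub_rev (b (x + s * I)) (b (x + I))]

theorem abs_integral_fluxRe_le (hb : IsBloch b B) (x : ℝ) (hy : 0 < y) (hy1 : y ≤ 1) :
    |∫ s in y..1, fluxRe b y (x + s * I)| ≤ 2 * B * (‖b (x + I)‖ + B) := by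
  have hB := hb.nonneg
  have hlog := intervalIntegral.intervalIntegrable_log' (a := y) (b := 1)
  have hbound : ∀ s ∈ Ioc y 1,
      ‖fluxRe b y (x + s * I)‖ ≤ 2 * B * ‖b (x + I)‖ - 2 * B ^ 2 * Real.log s := fun s hs => by
    have hs0 : 0 < s := hy.trans hs.1
    calc ‖fluxRe b y (x + s * I)‖ ≤ 2 * B * ‖b (x + s * I)‖ :=
          hb.abs_fluxRe_le hy.le (by simpa using hs.1.le) (by simpa using hs0)
      _ ≤ 2 * B * (‖b (x + I)‖ - B * Real.log s) := by
          gcongr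
          exact hb.norm_le_norm_sub_log x hs0 hs.2
      _ = 2 * B * ‖b (x + I)‖ - 2 * B ^ 2 * Real.log s := by ring
  calc |∫ s in y..1, fluxRe b y (x + s * I)|
      ≤ ∫ s in y..1, (2 * B * ‖b (x + I)‖ - 2 * B ^ 2 * Real.log s) :=
        intervalIntegral.norm_integral_le_of_norm_le hy1 (Eventually.of_forall hbound)
          (intervalIntegrable_const.sub (hlog.const_mul _))
    _ = (1 - y) * (2 * B * ‖b (x + I)‖) + 2 * B ^ 2 * (1 - y + y * Real.log y) := by
        rw [intervalIntegral.integral_sub intervalIntegrable_const (hlog.const_mul _),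
          intervalIntegral.integral_const, intervalIntegral.integral_const_mul, integral_log,
          smul_eq_mul, Real.log_one]
        ring
    _ ≤ 1 * (2 * B * ‖b (x + I)‖) + 2 * B ^ 2 * 1 := by
        have := mul_nonpos_of_nonneg_of_nonpos hy.le (Real.log_nonpos hy.le hy1)
        gcongr <;> linarith
    _ = 2 * B * (‖b (x + I)‖ + B) := by ring

theorem integral_norm_sq_eq (hb : IsBloch b B) (hx : x₁ ≤ x₂) (hy : 0 < y) (hy1 : y ≤ 1) :
    ∫ x in x₁..x₂, ‖b (x + y * I)‖ ^ 2 =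
      (∫ z in Icc x₁ x₂ ×ℂ Icc y 1, 4 * (z.im - y) * ‖deriv b z‖ ^ 2) -
        (∫ x in x₁..x₂, fluxIm b y (x + I)) -
        (∫ s in y..1, fluxRe b y (x₂ + s * I)) + ∫ s in y..1, fluxRe b y (x₁ + s * I) := by
  have hR : Icc x₁ x₂ ×ℂ Icc y 1 ⊆ upperHalfPlaneSet :=
    reProdIm_subset_upperHalfPlaneSet fun _ hs => hy.trans_le hs.1
  choose! P' Q' hP hQ hdiv using fun z => exists_hasFDerivAt_flux hb.differentiableOn y (z := z)
  have hcongr : EqOn (fun z => P' z 1 + Q' z I) (fun z => 4 * (z.im - y) * ‖deriv b z‖ ^ 2)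
      (Icc x₁ x₂ ×ℂ Icc y 1) := fun z hz => hdiv z (hR hz)
  have hmeas : MeasurableSet (Icc x₁ x₂ ×ℂ Icc y 1) :=
    measurableSet_reProdIm measurableSet_Icc measurableSet_Icc
  have hint : IntegrableOn (fun z => 4 * (z.im - y) * ‖deriv b z‖ ^ 2) (Icc x₁ x₂ ×ℂ Icc y 1) := by
    have := hb.continuousOn_deriv.mono hR
    exact ContinuousOn.integrableOn_compact (isCompact_Icc.reProdIm isCompact_Icc) (by fun_prop)
  have hgreen := integral_divergence_reProdIm hx hy1 (fun z hz => hP z (hR hz))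
    (fun z hz => hQ z (hR hz)) (hint.congr_fun hcongr.symm hmeas)
  rw [setIntegral_congr_fun hmeas hcongr] at hgreen
  simp only [fluxIm_of_im_eq b (z := (_ : ℝ) + y * I) (y := y) (by simp),
    intervalIntegral.integral_neg, ofReal_one, one_mul] at hgreen
  linarith

theorem norm_weighted_sub_blochEnergy_le (hb : IsBloch b B) (hy : 0 ≤ y) (hz : 0 < z.im) :
    ‖4 * (z.im - y) * ‖deriv b z‖ ^ 2 - blochEnergy (deriv b) z‖ ≤
      4 * B ^ 2 * y * z.im ^ (-2 : ℤ) :=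
  calc ‖4 * (z.im - y) * ‖deriv b z‖ ^ 2 - blochEnergy (deriv b) z‖
      = 4 * y * ‖deriv b z‖ ^ 2 := by
        rw [blochEnergy_eq, ← norm_neg, Real.norm_of_nonneg] <;> ring_nf
        positivity
    _ ≤ 4 * y * (B * z.im⁻¹) ^ 2 := by
        gcongr
        exact hb.norm_deriv_le hz
    _ = 4 * B ^ 2 * y * z.im ^ (-2 : ℤ) := by
        rw [zpow_neg, mul_pow, inv_pow]
        norm_cast
        ring

theorem abs_integral_weighted_sub_energy_le (hb : IsBloch b B) (hx : x₁ ≤ x₂) (hy : 0 < y)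
    (hy1 : y ≤ 1) :
    |(∫ z in Icc x₁ x₂ ×ℂ Icc y 1, 4 * (z.im - y) * ‖deriv b z‖ ^ 2) -
      ∫ z in Icc x₁ x₂ ×ℂ Icc y 1, blochEnergy (deriv b) z| ≤ 4 * B ^ 2 * (x₂ - x₁) := by
  set R : Set ℂ := Icc x₁ x₂ ×ℂ Icc y 1
  have hpos : ∀ z ∈ R, 0 < z.im := fun z hz => hy.trans_le hz.2.1
  have hg : ContinuousOn (deriv b) R := hb.continuousOn_deriv.mono hpos
  have hweighted : IntegrableOn (fun z => 4 * (z.im - y) * ‖deriv b z‖ ^ 2) R :=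
    ContinuousOn.integrableOn_compact (isCompact_Icc.reProdIm isCompact_Icc) (by fun_prop)
  have hint : IntegrableOn (fun z : ℂ => 4 * B ^ 2 * y * z.im ^ (-2 : ℤ)) R :=
    ContinuousOn.integrableOn_compact (isCompact_Icc.reProdIm isCompact_Icc)
      (continuousOn_const.mul
        (continuous_im.continuousOn.zpow₀ _ fun z hz => .inl (hpos z hz).ne'))
  have hprod := setIntegral_reProdIm_mul (fun _ => 4 * B ^ 2 * y) (fun s => s ^ (-2 : ℤ))
    (Icc x₁ x₂) (Icc y 1)
  rw [← integral_sub hweighted (integrableOn_blochEnergy_Icc hb.continuousOn_deriv hy)]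
  calc ‖∫ z in R, (4 * (z.im - y) * ‖deriv b z‖ ^ 2 - blochEnergy (deriv b) z)‖
      ≤ ∫ z in R, 4 * B ^ 2 * y * z.im ^ (-2 : ℤ) := by
        exact norm_integral_le_of_norm_le hint <| (ae_restrict_iff'
          (measurableSet_reProdIm measurableSet_Icc measurableSet_Icc)).2 <|
          .of_forall fun z hz => hb.norm_weighted_sub_blochEnergy_le hy.le (hpos z hz)
    _ = 4 * B ^ 2 * (x₂ - x₁) * (1 - y) := by
        rw [hprod, setIntegral_Icc_zpow_neg_two hy hy1]
        simp [hx]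
        field_simp
    _ ≤ 4 * B ^ 2 * (x₂ - x₁) * 1 := by
        have := sub_nonneg.2 hx
        gcongr
        linarith
    _ = 4 * B ^ 2 * (x₂ - x₁) := mul_one _

theorem exists_abs_integral_norm_sq_sub_energy_le (hb : IsBloch b B) (hx : x₁ ≤ x₂) :
    ∃ K, ∀ y : ℝ, 0 < y → y ≤ 1 →
      |(∫ x in x₁..x₂, ‖b (x + y * I)‖ ^ 2) -
        ∫ z in Icc x₁ x₂ ×ℂ Icc y 1, blochEnergy (deriv b) z| ≤ K := by
  have hB := hb.nonneg
  obtain ⟨M, hM⟩ := (isCompact_Icc (a := x₁) (b := x₂)).exists_bound_of_continuousOn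
    (continuous_horizontal hb.differentiableOn.continuousOn one_pos).continuousOn
  simp only [ofReal_one, one_mul] at hM
  have : 0 ≤ M := (norm_nonneg _).trans (hM x₁ (left_mem_Icc.2 hx))
  refine ⟨4 * B ^ 2 * (x₂ - x₁) + (2 * B * M + M ^ 2) * (x₂ - x₁) + 2 * (2 * B * (M + B)),
    fun y hy hy1 => ?_⟩
  have harea := hb.abs_integral_weighted_sub_energy_le hx hy hy1
  have htop : ‖∫ x in x₁..x₂, fluxIm b y (x + I)‖ ≤ (2 * B * M + M ^ 2) * |x₂ - x₁| :=
    intervalIntegral.norm_integral_le_of_norm_le_const fun x hxm => by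
      have hMx := hM x (Ioc_subset_Icc_self (uIoc_of_le hx ▸ hxm))
      refine (hb.abs_fluxIm_le hy.le (by simpa using hy1) (by simp)).trans ?_
      gcongr
  have hside : ∀ x ∈ Icc x₁ x₂, |∫ s in y..1, fluxRe b y (x + s * I)| ≤ 2 * B * (M + B) :=
    fun x hxm => (hb.abs_integral_fluxRe_le x hy hy1).trans (by gcongr; exact hM x hxm)
  have hleft := hside x₁ (left_mem_Icc.2 hx)
  have hright := hside x₂ (right_mem_Icc.2 hx)
  rw [abs_of_nonneg (sub_nonneg.2 hx), Real.norm_eq_abs] at htop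
  rw [hb.integral_norm_sq_eq hx hy hy1]
  rw [abs_le] at *
  constructor <;> linarith [harea.1, harea.2]

end IsBloch

/-! ### The asymptotic variance of a Bloch function -/

/-- The normalised quadratic mean `(1 / log (1/y)) ∫₀¹ |b(x + iy)|² dx`, whose upper limit as
`y → 0⁺` is `sigma01 b`. -/
noncomputable def logMeanSq (b : ℂ → ℂ) (y : ℝ) : ℝ :=
  (1 / Real.log (1 / y)) * ∫ x in (0 : ℝ)..1, ‖b (x + y * I)‖ ^ 2

theorem tendsto_log_one_div_nhdsGT_zero :
    Tendsto (fun y : ℝ => Real.log (1 / y)) (𝓝[>] 0) atTop := by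
  simpa only [one_div, Function.comp_def] using Real.tendsto_log_atTop.comp tendsto_inv_nhdsGT_zero

theorem eventually_logMeanSq_nonneg (b : ℂ → ℂ) : ∀ᶠ y in 𝓝[>] 0, 0 ≤ logMeanSq b y := by
  filter_upwards [tendsto_log_one_div_nhdsGT_zero.eventually_ge_atTop 0] with y hlog
  exact mul_nonneg (one_div_nonneg.2 hlog)
    (intervalIntegral.integral_nonneg zero_le_one fun _ _ => sq_nonneg _)

namespace IsBloch

variable {b : ℂ → ℂ} {B v C : ℝ}

theorem exists_abs_mul_logMeanSq_sub_energy_le (hb : IsBloch b B) :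
    ∃ K, ∀ᶠ y in 𝓝[>] 0, |Real.log (1 / y) * logMeanSq b y -
      ∫ z in Icc 0 1 ×ℂ Icc y 1, blochEnergy (deriv b) z| ≤ K := by
  obtain ⟨K, hK⟩ := hb.exists_abs_integral_norm_sq_sub_energy_le zero_le_one
  refine ⟨K, ?_⟩
  filter_upwards [Ioo_mem_nhdsGT one_pos,
    tendsto_log_one_div_nhdsGT_zero.eventually_gt_atTop 0] with y hy hlog
  rw [logMeanSq, ← mul_assoc, mul_one_div_cancel hlog.ne', one_mul]
  exact hK y hy.1 hy.2.le

theorem eventually_logMeanSq_le (hb : IsBloch b B) :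
    ∀ᶠ y in 𝓝[>] 0, logMeanSq b y ≤ 4 * B ^ 2 + 1 := by
  obtain ⟨K, hK⟩ := hb.exists_abs_mul_logMeanSq_sub_energy_le
  filter_upwards [hK, Ioo_mem_nhdsGT one_pos,
    tendsto_log_one_div_nhdsGT_zero.eventually_gt_atTop 0,
    tendsto_log_one_div_nhdsGT_zero.eventually_ge_atTop K] with y hKy hy hlog hlogK
  have henergy := setIntegral_blochEnergy_le hb.continuousOn_deriv hb.im_mul_norm_deriv_le
    zero_le_one hy.1 hy.2.le
  refine le_of_mul_le_mul_left ?_ hlog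
  linarith [(abs_le.1 hKy).2]

theorem sigma01_le (hb : IsBloch b B) : sigma01 b ≤ 4 * B ^ 2 + 1 :=
  limsup_le_of_le (.of_frequently_ge (eventually_logMeanSq_nonneg b).frequently)
    hb.eventually_logMeanSq_le

theorem le_sigma01 (hb : IsBloch b B)
    (h : ∃ᶠ y in 𝓝[>] 0, v * Real.log (1 / y) - C ≤
      ∫ z in Icc 0 1 ×ℂ Icc y 1, blochEnergy (deriv b) z) : v ≤ sigma01 b := by
  obtain ⟨K, hK⟩ := hb.exists_abs_mul_logMeanSq_sub_energy_le
  refine le_of_forall_lt_imp_le_of_dense fun w hw => ?_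
  have hgap : ∀ᶠ y : ℝ in 𝓝[>] 0, C + K ≤ (v - w) * Real.log (1 / y) :=
    (tendsto_log_one_div_nhdsGT_zero.const_mul_atTop (sub_pos.2 hw)).eventually_ge_atTop _
  have hlog := tendsto_log_one_div_nhdsGT_zero.eventually_gt_atTop 0
  refine le_limsup_of_frequently_le ((h.and_eventually (hK.and (hgap.and hlog))).mono ?_)
    (isBoundedUnder_of_eventually_le hb.eventually_logMeanSq_le)
  rintro y ⟨henergy, hKy, hgapy, hlogy⟩
  refine le_of_mul_le_mul_left ?_ hlogy
  rw [← logMeanSq]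
  linarith [(abs_le.1 hKy).1]

end IsBloch

/-! ### Integrals of the cubic kernel -/

theorem indicator_le_norm_rpow_eq {E : Type*} [NormedAddCommGroup E] (p r : ℝ) :
    {x : E | r ≤ ‖x‖}.indicator (fun x => ‖x‖ ^ p) =
      fun x => (Ici r).indicator (fun ρ : ℝ => ρ ^ p) ‖x‖ := by
  ext x
  simp only [indicator_apply, mem_ofPred_eq, mem_Ici]

theorem eqOn_pow_finrank_mul_indicator_rpow (E : Type*) [NormedAddCommGroup E] [NormedSpace ℝ E]
    [FiniteDimensional ℝ E] [Nontrivial E] (p r : ℝ) :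
    EqOn (fun ρ : ℝ => ρ ^ (Module.finrank ℝ E - 1) • (Ici r).indicator (fun ρ : ℝ => ρ ^ p) ρ)
      ((Ici r).indicator fun ρ => ρ ^ (p + Module.finrank ℝ E - 1)) (Ioi 0) := by
  intro ρ hρ
  have hdim : 1 ≤ Module.finrank ℝ E := Module.finrank_pos
  by_cases h : ρ ∈ Ici r
  · simp only [indicator_of_mem h, smul_eq_mul]
    rw [← Real.rpow_natCast, ← Real.rpow_add hρ, Nat.cast_sub hdim]
    congr 1
    push_cast
    ring
  · simp only [indicator_of_notMem h, smul_zero]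

section NormRpow

variable {E : Type*} [NormedAddCommGroup E] [NormedSpace ℝ E] [FiniteDimensional ℝ E]
  [MeasurableSpace E] [BorelSpace E] [Nontrivial E] (μ : Measure E) [μ.IsAddHaarMeasure] {p r : ℝ}

theorem integrableOn_norm_rpow (hp : p < -Module.finrank ℝ E) (hr : 0 < r) :
    IntegrableOn (fun x : E => ‖x‖ ^ p) {x | r ≤ ‖x‖} μ := by
  rw [← integrable_indicator_iff (measurableSet_le measurable_const measurable_norm),
    indicator_le_norm_rpow_eq, integrable_fun_norm_addHaar μ,
    integrableOn_congr_fun (eqOn_pow_finrank_mul_indicator_rpow E p r) measurableSet_Ioi]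
  refine Integrable.integrableOn ?_
  rw [integrable_indicator_iff measurableSet_Ici, integrableOn_Ici_iff_integrableOn_Ioi]
  exact integrableOn_Ioi_rpow_of_lt (by linarith) hr

theorem setIntegral_norm_rpow (hp : p < -Module.finrank ℝ E) (hr : 0 < r) :
    ∫ x in {x : E | r ≤ ‖x‖}, ‖x‖ ^ p ∂μ = Module.finrank ℝ E * μ.real (Metric.ball 0 1) *
      (-r ^ (p + Module.finrank ℝ E) / (p + Module.finrank ℝ E)) := by
  rw [← integral_indicator (measurableSet_le measurable_const measurable_norm),
    indicator_le_norm_rpow_eq, integral_fun_norm_addHaar μ,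
    setIntegral_congr_fun measurableSet_Ioi (eqOn_pow_finrank_mul_indicator_rpow E p r),
    setIntegral_indicator measurableSet_Ici,
    inter_eq_self_of_subset_right (Ici_subset_Ioi.2 hr), integral_Ici_eq_integral_Ioi,
    integral_Ioi_rpow_of_lt (by linarith) hr, nsmul_eq_mul, smul_eq_mul, sub_add_cancel, mul_assoc]

end NormRpow

theorem inv_norm_pow_three_eq_rpow (z : ℂ) : (‖z‖ ^ 3)⁻¹ = ‖z‖ ^ (-3 : ℝ) := by
  rw [Real.rpow_neg (norm_nonneg z), ← Real.rpow_natCast]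
  norm_num

section CubicKernel

variable {r h : ℝ} {z ζ : ℂ}

theorem integrableOn_inv_norm_sub_pow_three (hr : 0 < r) (z : ℂ) :
    IntegrableOn (fun ζ => (‖ζ - z‖ ^ 3)⁻¹) {ζ | r ≤ ‖ζ - z‖} := by
  simp only [inv_norm_pow_three_eq_rpow]
  exact ((measurePreserving_sub_right volume z).integrableOn_comp_preimage
    (MeasurableEquiv.subRight z).measurableEmbedding).2
    (integrableOn_norm_rpow volume (by rw [Complex.finrank_real_complex]; norm_num) hr)

theorem setIntegral_inv_norm_sub_pow_three (hr : 0 < r) (z : ℂ) :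
    ∫ ζ in {ζ | r ≤ ‖ζ - z‖}, (‖ζ - z‖ ^ 3)⁻¹ = 2 * Real.pi / r := by
  simp only [inv_norm_pow_three_eq_rpow]
  have htranslate := (measurePreserving_sub_right volume z).setIntegral_preimage_emb
    (MeasurableEquiv.subRight z).measurableEmbedding (fun ζ : ℂ => ‖ζ‖ ^ (-3 : ℝ)) {ζ | r ≤ ‖ζ‖}
  refine htranslate.trans ?_
  rw [setIntegral_norm_rpow volume (by rw [Complex.finrank_real_complex]; norm_num) hr,
    Complex.finrank_real_complex, Measure.real, Complex.volume_ball]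
  norm_num [Real.rpow_neg_one]
  ring

theorem inv_sub_sq_add_sq_eq_cauchyPDFReal {y : ℝ} (hy : 0 < y) (x : ℝ) :
    (fun u : ℝ => ((u - x) ^ 2 + y ^ 2)⁻¹) =
      fun u => Real.pi / y * ProbabilityTheory.cauchyPDFReal x y.toNNReal u := by
  ext u
  rw [ProbabilityTheory.cauchyPDFReal, Real.coe_toNNReal y hy.le]
  field_simp

theorem integrable_inv_sub_sq_add_sq {y : ℝ} (hy : 0 < y) (x : ℝ) :
    Integrable fun u : ℝ => ((u - x) ^ 2 + y ^ 2)⁻¹ := by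
  rw [inv_sub_sq_add_sq_eq_cauchyPDFReal hy]
  exact (ProbabilityTheory.integrable_cauchyPDFReal x).const_mul _

theorem integral_inv_sub_sq_add_sq {y : ℝ} (hy : 0 < y) (x : ℝ) :
    ∫ u : ℝ, ((u - x) ^ 2 + y ^ 2)⁻¹ = Real.pi / y := by
  rw [inv_sub_sq_add_sq_eq_cauchyPDFReal hy, integral_const_mul,
    ProbabilityTheory.integral_cauchyPDFReal_eq_one x (Real.toNNReal_pos.2 hy).ne', mul_one]

theorem im_le_norm_sub (hζ : ζ.im ≤ 0) : z.im ≤ ‖ζ - z‖ := by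
  have := (neg_le_abs (ζ - z).im).trans (abs_im_le_norm (ζ - z))
  rw [sub_im] at this
  linarith

theorem inv_norm_sub_pow_three_le (hz : 0 < z.im) (hζ : ζ.im ≤ 0) :
    (‖ζ - z‖ ^ 3)⁻¹ ≤ ((ζ.re - z.re) ^ 2 + z.im ^ 2)⁻¹ * z.im⁻¹ := by
  have hsq : (ζ.re - z.re) ^ 2 + z.im ^ 2 ≤ ‖ζ - z‖ ^ 2 := by
    rw [← normSq_eq_norm_sq, normSq_apply, sub_re, sub_im]
    nlinarith
  rw [← mul_inv, pow_succ ‖ζ - z‖ 2]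
  have := im_le_norm_sub (z := z) hζ
  gcongr

theorem integrableOn_strip_inv_norm_sub_pow_three (hz : 0 < z.im) (h : ℝ) :
    IntegrableOn (fun ζ => (‖ζ - z‖ ^ 3)⁻¹) (univ ×ℂ Icc (-h) 0) := by
  have hdom := integrableOn_reProdIm_mul (s := univ) (t := Icc (-h) 0) (g := fun _ => z.im⁻¹)
    (integrable_inv_sub_sq_add_sq hz z.re).integrableOn (by simp)
  refine Integrable.mono' hdom (by fun_prop) ?_
  filter_upwards [ae_restrict_mem (measurableSet_reProdIm .univ measurableSet_Icc)] with ζ hζ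
  rw [Real.norm_of_nonneg (by positivity)]
  exact inv_norm_sub_pow_three_le hz hζ.2.2

theorem setIntegral_strip_inv_norm_sub_pow_three_le (hz : 0 < z.im) (hh : 0 ≤ h) :
    ∫ ζ in univ ×ℂ Icc (-h) 0, (‖ζ - z‖ ^ 3)⁻¹ ≤ Real.pi * h / z.im ^ 2 := by
  have hdom := integrableOn_reProdIm_mul (s := univ) (t := Icc (-h) 0) (g := fun _ => z.im⁻¹)
    (integrable_inv_sub_sq_add_sq hz z.re).integrableOn (by simp)
  calc ∫ ζ in univ ×ℂ Icc (-h) 0, (‖ζ - z‖ ^ 3)⁻¹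
      ≤ ∫ ζ in univ ×ℂ Icc (-h) 0, ((ζ.re - z.re) ^ 2 + z.im ^ 2)⁻¹ * z.im⁻¹ :=
        setIntegral_mono_on (integrableOn_strip_inv_norm_sub_pow_three hz h) hdom
          (measurableSet_reProdIm .univ measurableSet_Icc)
          fun ζ hζ => inv_norm_sub_pow_three_le hz hζ.2.2
    _ = Real.pi * h / z.im ^ 2 := by
        rw [setIntegral_reProdIm_mul (fun u => ((u - z.re) ^ 2 + z.im ^ 2)⁻¹) fun _ => z.im⁻¹,
          setIntegral_univ, integral_inv_sub_sq_add_sq hz, setIntegral_const,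
          Real.volume_real_Icc_of_le (by linarith), smul_eq_mul]
        field_simp
        ring

end CubicKernel

/-! ### The derivative of the Beurling transform -/

/-- The lower half-plane, over which the Beurling transform integrates. -/
abbrev lowerHalfPlaneSet : Set ℂ := {ζ | ζ.im < 0}

theorem measurableSet_lowerHalfPlaneSet : MeasurableSet lowerHalfPlaneSet :=
  measurableSet_lt measurable_im measurable_const

/-- Beltrami coefficients in the closed unit ball of `L^∞(ℂ)`. -/
structure IsBeltrami (μ : ℂ → ℂ) : Prop where
  measurable : Measurable μ
  norm_le_one : ∀ᵐ ζ, ‖μ ζ‖ ≤ 1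

section TderivBounds

variable {μ ν : ℂ → ℂ} {z : ℂ} {c h r : ℝ}

theorem integrableOn_lowerHalfPlaneSet_inv_norm_sub_pow_three (hz : 0 < z.im) :
    IntegrableOn (fun ζ => (‖ζ - z‖ ^ 3)⁻¹) lowerHalfPlaneSet :=
  (integrableOn_inv_norm_sub_pow_three hz z).mono_set fun _ hζ => im_le_norm_sub (le_of_lt hζ)

theorem norm_div_sub_pow_three_le {w ζ : ℂ} (hw : ‖w‖ ≤ c) :
    ‖w / (ζ - z) ^ 3‖ ≤ c * (‖ζ - z‖ ^ 3)⁻¹ := by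
  rw [norm_div, norm_pow, div_eq_mul_inv]
  gcongr

theorem IsBeltrami.integrableOn_div (hμ : IsBeltrami μ) (hz : 0 < z.im) :
    IntegrableOn (fun ζ => μ ζ / (ζ - z) ^ 3) lowerHalfPlaneSet := by
  have hmeas := hμ.measurable
  refine Integrable.mono' ((integrableOn_lowerHalfPlaneSet_inv_norm_sub_pow_three hz).const_mul 1)
    (hmeas.div (by fun_prop)).aestronglyMeasurable ?_
  filter_upwards [ae_restrict_of_ae hμ.norm_le_one] with ζ hζ
  exact norm_div_sub_pow_three_le hζ

theorem norm_setIntegral_div_sub_pow_three_le (hz : 0 < z.im) (hh : 0 ≤ h) (hr : 0 < r)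
    (hν : ∀ᵐ ζ, ‖ν ζ‖ ≤ c) (hsupp : ∀ ζ : ℂ, ζ.im < -h → ‖ζ - z‖ < r → ν ζ = 0) :
    ‖∫ ζ in lowerHalfPlaneSet, ν ζ / (ζ - z) ^ 3‖ ≤
      c * (Real.pi * h / z.im ^ 2 + 2 * Real.pi / r) := by
  have hc : 0 ≤ c := (norm_nonneg _).trans hν.exists.choose_spec
  set k : ℂ → ℝ := fun ζ => (‖ζ - z‖ ^ 3)⁻¹
  set strip : Set ℂ := univ ×ℂ Icc (-h) 0
  set far : Set ℂ := {ζ | r ≤ ‖ζ - z‖}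
  have hk : 0 ≤ k := fun ζ => by positivity
  have hstrip : IntegrableOn k strip := integrableOn_strip_inv_norm_sub_pow_three hz h
  have hfar : IntegrableOn k far := integrableOn_inv_norm_sub_pow_three hr z
  have hvanish : ∀ ζ ∈ lowerHalfPlaneSet \ (lowerHalfPlaneSet ∩ (strip ∪ far)),
      ν ζ / (ζ - z) ^ 3 = 0 := by
    rintro ζ ⟨hζ, hout⟩
    rw [hsupp ζ, zero_div]
    · exact not_le.1 fun h' => hout ⟨hζ, .inl ⟨trivial, h', le_of_lt hζ⟩⟩
    · exact not_le.1 fun h' => hout ⟨hζ, .inr h'⟩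
  calc ‖∫ ζ in lowerHalfPlaneSet, ν ζ / (ζ - z) ^ 3‖
      = ‖∫ ζ in lowerHalfPlaneSet ∩ (strip ∪ far), ν ζ / (ζ - z) ^ 3‖ := by
        rw [setIntegral_eq_of_subset_of_forall_sdiff_eq_zero measurableSet_lowerHalfPlaneSet
          inter_subset_left hvanish]
    _ ≤ ∫ ζ in lowerHalfPlaneSet ∩ (strip ∪ far), c * k ζ :=
        norm_integral_le_of_norm_le (((hstrip.union hfar).mono_set inter_subset_right).const_mul c)
          ((ae_restrict_of_ae hν).mono fun ζ hζ => norm_div_sub_pow_three_le hζ)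
    _ ≤ c * ∫ ζ in strip ∪ far, k ζ := by
        rw [integral_const_mul]
        exact mul_le_mul_of_nonneg_left (setIntegral_mono_set (hstrip.union hfar) (.of_forall hk)
          inter_subset_right.eventuallyLE) hc
    _ ≤ c * (Real.pi * h / z.im ^ 2 + 2 * Real.pi / r) := by
        refine mul_le_mul_of_nonneg_left ?_ hc
        refine (setIntegral_union_le_of_nonneg strip far hk hstrip hfar).trans ?_
        exact add_le_add (setIntegral_strip_inv_norm_sub_pow_three_le hz hh)
          (setIntegral_inv_norm_sub_pow_three hr z).le

theorem norm_Tderiv_le (hz : 0 < z.im) (hh : 0 ≤ h) (hr : 0 < r) (hν : ∀ᵐ ζ, ‖ν ζ‖ ≤ c)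
    (hsupp : ∀ ζ : ℂ, ζ.im < -h → ‖ζ - z‖ < r → ν ζ = 0) :
    ‖Tderiv ν z‖ ≤ c * (2 * h / z.im ^ 2 + 4 / r) :=
  calc ‖Tderiv ν z‖ = 2 / Real.pi * ‖∫ ζ in lowerHalfPlaneSet, ν ζ / (ζ - z) ^ 3‖ := by
        rw [Tderiv, norm_mul, norm_neg, norm_div, Complex.norm_ofNat,
          Complex.norm_of_nonneg Real.pi_pos.le]
    _ ≤ 2 / Real.pi * (c * (Real.pi * h / z.im ^ 2 + 2 * Real.pi / r)) := by
        gcongr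
        exact norm_setIntegral_div_sub_pow_three_le hz hh hr hν hsupp
    _ = c * (2 * h / z.im ^ 2 + 4 / r) := by
        field_simp
        ring

theorem IsBeltrami.im_mul_norm_Tderiv_le (hμ : IsBeltrami μ) (hz : 0 < z.im) :
    z.im * ‖Tderiv μ z‖ ≤ 4 := by
  have hT : ‖Tderiv μ z‖ ≤ 1 * (2 * 0 / z.im ^ 2 + 4 / z.im) :=
    norm_Tderiv_le hz le_rfl hz hμ.norm_le_one fun ζ hζ hlt =>
      absurd (im_le_norm_sub (by simpa only [neg_zero] using hζ.le)) (not_le.2 hlt)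
  rw [mul_zero, zero_div, zero_add, one_mul, le_div_iff₀ hz] at hT
  linarith

theorem IsBeltrami.norm_Tderiv_sub_le (hμ : IsBeltrami μ) (hν : IsBeltrami ν) (hz : 0 < z.im)
    (hh : 0 ≤ h) (hr : 0 < r)
    (heq : ∀ ζ : ℂ, ζ.im < -h → ‖ζ - z‖ < r → μ ζ = ν ζ) :
    ‖Tderiv μ z - Tderiv ν z‖ ≤ 4 * h / z.im ^ 2 + 8 / r := by
  have hsub : Tderiv μ z - Tderiv ν z = Tderiv (μ - ν) z := by
    simp only [Tderiv, Pi.sub_apply, sub_div]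
    rw [integral_sub (hμ.integrableOn_div hz) (hν.integrableOn_div hz), mul_sub]
  have hbound : ∀ᵐ ζ, ‖(μ - ν) ζ‖ ≤ 2 := by
    filter_upwards [hμ.norm_le_one, hν.norm_le_one] with ζ h₁ h₂
    exact (norm_sub_le _ _).trans (by linarith)
  rw [hsub]
  refine (norm_Tderiv_le hz hh hr hbound fun ζ h₁ h₂ => ?_).trans_eq (by ring)
  rw [Pi.sub_apply, heq ζ h₁ h₂, sub_self]

end TderivBounds

/-! ### The modified Beurling transform is a Bloch function -/

/-- The difference `S^#μ(z) - S^#μ(w)`. Its integral converges for all `w`, `z` in the upper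
half-plane, whereas the normalisation `ζ⁻²` in `S^#μ` need not be integrable near `0`. -/
noncomputable def beurlingIncrement (μ : ℂ → ℂ) (w z : ℂ) : ℂ :=
  -(1 / (Real.pi : ℂ)) *
    ∫ ζ in lowerHalfPlaneSet, μ ζ * (((ζ - z) ^ 2)⁻¹ - ((ζ - w) ^ 2)⁻¹)

theorem norm_inv_sq_sub_inv_sq_le {𝕜 : Type*} [NormedField 𝕜] {u v : 𝕜} (hu : u ≠ 0)
    (hv : v ≠ 0) :
    ‖(u ^ 2)⁻¹ - (v ^ 2)⁻¹‖ ≤ ‖u - v‖ * ((‖u‖ ^ 3)⁻¹ + (‖v‖ ^ 3)⁻¹) := by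
  have hfactor : (u ^ 2)⁻¹ - (v ^ 2)⁻¹ = -(u - v) * (u⁻¹ * v⁻¹ * (u⁻¹ + v⁻¹)) := by
    field_simp
    ring
  rw [hfactor, norm_mul, norm_neg, norm_mul, norm_mul, norm_inv, norm_inv, ← inv_pow, ← inv_pow]
  refine mul_le_mul_of_nonneg_left ?_ (norm_nonneg _)
  have hsum : ‖u⁻¹ + v⁻¹‖ ≤ ‖u‖⁻¹ + ‖v‖⁻¹ := by
    simpa only [norm_inv] using norm_add_le u⁻¹ v⁻¹
  have ha : 0 ≤ ‖u‖⁻¹ := by positivity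
  have hb : 0 ≤ ‖v‖⁻¹ := by positivity
  calc ‖u‖⁻¹ * ‖v‖⁻¹ * ‖u⁻¹ + v⁻¹‖ ≤ ‖u‖⁻¹ * ‖v‖⁻¹ * (‖u‖⁻¹ + ‖v‖⁻¹) := by gcongr
    _ ≤ ‖u‖⁻¹ ^ 3 + ‖v‖⁻¹ ^ 3 := by
        nlinarith [mul_nonneg (add_nonneg ha hb) (sq_nonneg (‖u‖⁻¹ - ‖v‖⁻¹))]

theorem sub_ne_zero_of_im_neg {z ζ : ℂ} (hz : 0 < z.im) (hζ : ζ.im < 0) : ζ - z ≠ 0 :=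
  norm_pos_iff.1 (hz.trans_le (im_le_norm_sub hζ.le))

theorem inv_norm_sub_pow_three_le_of_mem_ball {w z ζ : ℂ} (hz : 0 < z.im) (hζ : ζ.im < 0)
    (hw : w ∈ Metric.ball z (z.im / 2)) :
    (‖ζ - w‖ ^ 3)⁻¹ ≤ 8 * (‖ζ - z‖ ^ 3)⁻¹ := by
  have hzζ : z.im ≤ ‖ζ - z‖ := im_le_norm_sub hζ.le
  have hpos : 0 < ‖ζ - z‖ := hz.trans_le hzζ
  have hhalf : ‖ζ - z‖ / 2 ≤ ‖ζ - w‖ := by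
    have := norm_sub_le_norm_sub_add_norm_sub ζ w z
    rw [Metric.mem_ball, dist_eq_norm] at hw
    linarith
  calc (‖ζ - w‖ ^ 3)⁻¹ ≤ ((‖ζ - z‖ / 2) ^ 3)⁻¹ := by gcongr
    _ = 8 * (‖ζ - z‖ ^ 3)⁻¹ := by
        field_simp
        norm_num

theorem im_pos_of_mem_ball {w z : ℂ} (hw : w ∈ Metric.ball z (z.im / 2)) (hz : 0 < z.im) :
    0 < w.im := by
  have := (neg_le_abs (w - z).im).trans (abs_im_le_norm (w - z))
  rw [Metric.mem_ball, dist_eq_norm] at hw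
  rw [sub_im] at this
  linarith

theorem hasDerivAt_inv_sub_sq {w ζ : ℂ} (h : ζ - w ≠ 0) :
    HasDerivAt (fun w => ((ζ - w) ^ 2)⁻¹) (2 / (ζ - w) ^ 3) w := by
  refine ((((hasDerivAt_id w).const_sub ζ).pow 2).inv (pow_ne_zero 2 h)).congr_deriv ?_
  simp only [id]
  field_simp
  norm_num
  ring

namespace IsBeltrami

variable {μ : ℂ → ℂ} {w z : ℂ}

theorem integrableOn_increment (hμ : IsBeltrami μ) (hw : 0 < w.im) (hz : 0 < z.im) :
    IntegrableOn (fun ζ => μ ζ * (((ζ - z) ^ 2)⁻¹ - ((ζ - w) ^ 2)⁻¹)) lowerHalfPlaneSet := by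
  have hmeas := hμ.measurable
  refine Integrable.mono' (((integrableOn_lowerHalfPlaneSet_inv_norm_sub_pow_three hz).add
    (integrableOn_lowerHalfPlaneSet_inv_norm_sub_pow_three hw)).const_mul ‖w - z‖)
    (Measurable.aestronglyMeasurable (by fun_prop)) ?_
  filter_upwards [ae_restrict_of_ae hμ.norm_le_one,
    ae_restrict_mem measurableSet_lowerHalfPlaneSet] with ζ hμζ hζ
  have hdiff := norm_inv_sq_sub_inv_sq_le (sub_ne_zero_of_im_neg hz hζ)
    (sub_ne_zero_of_im_neg hw hζ)
  rw [sub_sub_sub_cancel_left] at hdiff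
  rw [norm_mul]
  exact (mul_le_of_le_one_left (norm_nonneg _) hμζ).trans hdiff

theorem hasDerivAt_beurlingIncrement (hμ : IsBeltrami μ) (hw : 0 < w.im) (hz : 0 < z.im) :
    HasDerivAt (beurlingIncrement μ w) (Tderiv μ z) z := by
  have hmeas := hμ.measurable
  have hL := ae_restrict_mem (μ := volume) measurableSet_lowerHalfPlaneSet
  have hderiv := (hasDerivAt_integral_of_dominated_loc_of_deriv_le
    (μ := volume.restrict lowerHalfPlaneSet) (x₀ := z)
    (F := fun z ζ => μ ζ * (((ζ - z) ^ 2)⁻¹ - ((ζ - w) ^ 2)⁻¹))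
    (F' := fun z ζ => μ ζ * (2 / (ζ - z) ^ 3)) (bound := fun ζ => 2 * (8 * (‖ζ - z‖ ^ 3)⁻¹))
    (Metric.ball_mem_nhds z (half_pos hz))
    (.of_forall fun z => Measurable.aestronglyMeasurable (by fun_prop))
    (hμ.integrableOn_increment hw hz)
    (hmeas.mul (measurable_const.div (by fun_prop))).aestronglyMeasurable
    (by
      filter_upwards [hL, ae_restrict_of_ae hμ.norm_le_one] with ζ hζ hμζ v hv
      rw [norm_mul, norm_div, norm_pow, Complex.norm_ofNat, div_eq_mul_inv]
      exact (mul_le_of_le_one_left (by positivity) hμζ).trans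
        (mul_le_mul_of_nonneg_left (inv_norm_sub_pow_three_le_of_mem_ball hz hζ hv) two_pos.le))
    (((integrableOn_lowerHalfPlaneSet_inv_norm_sub_pow_three hz).const_mul 8).const_mul 2)
    (hL.mono fun ζ hζ v hv => ((hasDerivAt_inv_sub_sq (sub_ne_zero_of_im_neg
      (im_pos_of_mem_ball hv hz) hζ)).sub_const _).const_mul _)).2
  refine (hderiv.const_mul (-(1 / (Real.pi : ℂ)))).congr_deriv ?_
  have hfactor : ∀ ζ, μ ζ * (2 / (ζ - z) ^ 3) = 2 * (μ ζ / (ζ - z) ^ 3) := fun ζ => by ring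
  rw [Tderiv, integral_congr_ae (.of_forall hfactor), integral_const_mul]
  ring

theorem continuousOn_Tderiv (hμ : IsBeltrami μ) : ContinuousOn (Tderiv μ) upperHalfPlaneSet := by
  have hderiv : ∀ z ∈ upperHalfPlaneSet, HasDerivAt (beurlingIncrement μ I) (Tderiv μ z) z :=
    fun z hz => hμ.hasDerivAt_beurlingIncrement (by simp) hz
  have hhol : DifferentiableOn ℂ (beurlingIncrement μ I) upperHalfPlaneSet :=
    fun z hz => (hderiv z hz).differentiableAt.differentiableWithinAt
  exact (hhol.deriv isOpen_upperHalfPlaneSet).continuousOn.congr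
    fun z hz => (hderiv z hz).deriv.symm

end IsBeltrami

/-- Absolute convergence of the integral defining `Ssharp μ z`. -/
def SsharpIntegrableAt (μ : ℂ → ℂ) (z : ℂ) : Prop :=
  IntegrableOn (fun ζ => μ ζ * (((ζ - z) ^ 2)⁻¹ - (ζ ^ 2)⁻¹)) lowerHalfPlaneSet

namespace IsBeltrami

variable {μ : ℂ → ℂ} {w z : ℂ}

theorem ssharpIntegrableAt_of_ssharpIntegrableAt (hμ : IsBeltrami μ) (hw : 0 < w.im)
    (hz : 0 < z.im) (h : SsharpIntegrableAt μ w) : SsharpIntegrableAt μ z := by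
  refine (h.add (hμ.integrableOn_increment hw hz)).congr (.of_forall fun ζ => ?_)
  simp only [Pi.add_apply]
  ring

theorem Ssharp_eq_add_beurlingIncrement (hμ : IsBeltrami μ) (hw : 0 < w.im) (hz : 0 < z.im)
    (h : SsharpIntegrableAt μ w) : Ssharp μ z = Ssharp μ w + beurlingIncrement μ w z := by
  rw [Ssharp, Ssharp, beurlingIncrement, ← mul_add,
    ← integral_add h (hμ.integrableOn_increment hw hz)]
  congr 2 with ζ
  ring

theorem hasDerivAt_Ssharp (hμ : IsBeltrami μ) (hz : 0 < z.im) (h : SsharpIntegrableAt μ z) :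
    HasDerivAt (Ssharp μ) (Tderiv μ z) z := by
  refine ((hμ.hasDerivAt_beurlingIncrement hz hz).const_add (Ssharp μ z)).congr_of_eventuallyEq ?_
  filter_upwards [isOpen_upperHalfPlaneSet.mem_nhds hz] with v hv
  exact hμ.Ssharp_eq_add_beurlingIncrement hz hv h

theorem eqOn_Ssharp_zero (hμ : IsBeltrami μ) (hz : 0 < z.im) (h : ¬ SsharpIntegrableAt μ z) :
    EqOn (Ssharp μ) 0 upperHalfPlaneSet := fun v hv => by
  have hv' : ¬ SsharpIntegrableAt μ v :=
    fun hv' => h (hμ.ssharpIntegrableAt_of_ssharpIntegrableAt hv hz hv')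
  rw [Ssharp, integral_undef hv', mul_zero, Pi.zero_apply]

-- Where the integral diverges `Ssharp μ` takes the junk value `0`, which is also a Bloch function.
theorem isBloch_Ssharp (hμ : IsBeltrami μ) : IsBloch (Ssharp μ) 4 := by
  have hderiv : ∀ z ∈ upperHalfPlaneSet,
      HasDerivAt (Ssharp μ) (Tderiv μ z) z ∨ HasDerivAt (Ssharp μ) 0 z := by
    intro z hz
    by_cases h : SsharpIntegrableAt μ z
    · exact .inl (hμ.hasDerivAt_Ssharp hz h)
    · refine .inr ((hasDerivAt_const z 0).congr_of_eventuallyEq ?_)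
      filter_upwards [isOpen_upperHalfPlaneSet.mem_nhds hz] using hμ.eqOn_Ssharp_zero hz h
  refine ⟨fun z hz => ?_, fun z hz => ?_⟩
  · rcases hderiv z hz with h | h <;> exact h.differentiableAt.differentiableWithinAt
  · rcases hderiv z hz with h | h <;> rw [h.deriv]
    · exact hμ.im_mul_norm_Tderiv_le hz
    · rw [norm_zero, mul_zero]
      norm_num

theorem sigma01_Ssharp_le (hμ : IsBeltrami μ) : sigma01 (Ssharp μ) ≤ 65 :=
  hμ.isBloch_Ssharp.sigma01_le.trans (by norm_num)

theorem sigma01_Ssharp_le_SigmaSqH (hμ : IsBeltrami μ) (hsupp : ∀ ζ : ℂ, 0 ≤ ζ.im → μ ζ = 0) :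
    sigma01 (Ssharp μ) ≤ SigmaSqH := by
  refine le_csSup ⟨65, ?_⟩ ⟨μ, hμ.measurable, hμ.norm_le_one, hsupp, rfl⟩
  rintro _ ⟨ν, hν, hν', -, rfl⟩
  exact (IsBeltrami.mk hν hν').sigma01_Ssharp_le

end IsBeltrami

theorem SigmaSqH_le : SigmaSqH ≤ 65 := by
  refine Real.sSup_le ?_ (by norm_num)
  rintro _ ⟨μ, hμ, hμ', -, rfl⟩
  exact (IsBeltrami.mk hμ hμ').sigma01_Ssharp_le

/-! ### Locality of the energy -/

section EdgeError

variable {a b h t : ℝ} {z ζ : ℂ}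

theorem integrableOn_Ioo_sub_right_rpow {r : ℝ} (hr : -1 < r) (hab : a ≤ b) :
    IntegrableOn (fun x => (x - a) ^ r) (Ioo a b) := by
  have := (intervalIntegral.intervalIntegrable_rpow' (a := 0) (b := b - a) hr).comp_sub_right a
  rw [zero_add, sub_add_cancel, intervalIntegrable_iff_integrableOn_Ioo_of_le hab] at this
  exact this

theorem integrableOn_Ioo_sub_left_rpow {r : ℝ} (hr : -1 < r) (hab : a ≤ b) :
    IntegrableOn (fun x => (b - x) ^ r) (Ioo a b) := by
  have :=
    ((intervalIntegral.intervalIntegrable_rpow' (a := 0) (b := b - a) hr).comp_sub_left b).symm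
  rw [sub_zero, sub_sub_cancel, intervalIntegrable_iff_integrableOn_Ioo_of_le hab] at this
  exact this

theorem setIntegral_Ioo_sub_right_rpow {r : ℝ} (hr : -1 < r) (hab : a ≤ b) :
    ∫ x in Ioo a b, (x - a) ^ r = (b - a) ^ (r + 1) / (r + 1) := by
  rw [← integral_Ioc_eq_integral_Ioo, ← intervalIntegral.integral_of_le hab,
    intervalIntegral.integral_comp_sub_right (fun x => x ^ r), sub_self,
    integral_rpow (.inl hr), Real.zero_rpow (by linarith), sub_zero]

theorem setIntegral_Ioo_sub_left_rpow {r : ℝ} (hr : -1 < r) (hab : a ≤ b) :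
    ∫ x in Ioo a b, (b - x) ^ r = (b - a) ^ (r + 1) / (r + 1) := by
  rw [← integral_Ioc_eq_integral_Ioo, ← intervalIntegral.integral_of_le hab,
    intervalIntegral.integral_comp_sub_left (fun x => x ^ r), sub_self,
    integral_rpow (.inl hr), Real.zero_rpow (by linarith), sub_zero]

/-- A bound at `z` for the effect on `Tderiv μ` of altering `μ`, within the unit ball, off the
rectangle `(a, b) × (-t, -h)`. -/
noncomputable def edgeError (a b h t : ℝ) (z : ℂ) : ℝ :=
  4 * h * z.im ^ (-2 : ℝ) + 8 / t +
    ((z.re - a) ^ (-(1 / 2) : ℝ) + (b - z.re) ^ (-(1 / 2) : ℝ)) * (8 * z.im ^ (-(1 / 2) : ℝ))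

theorem sqrt_mul_im_le_norm_sub {d : ℝ} (hz : 0 ≤ z.im) (hζ : ζ.im ≤ 0) (hd : 0 ≤ d)
    (hre : d ≤ |ζ.re - z.re|) : √(d * z.im) ≤ ‖ζ - z‖ := by
  refine Real.sqrt_le_iff.2 ⟨norm_nonneg _, ?_⟩
  have hd2 : d ^ 2 ≤ (ζ.re - z.re) ^ 2 := sq_le_sq.2 (by rwa [abs_of_nonneg hd])
  rw [← normSq_eq_norm_sq, normSq_apply, sub_re, sub_im]
  nlinarith [sq_nonneg (d - z.im)]

theorem div_min_le_add {c r s : ℝ} (hc : 0 ≤ c) (hr : 0 < r) (hs : 0 < s) :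
    c / min r s ≤ c / r + c / s := by
  rcases min_choice r s with h | h <;> rw [h]
  · exact le_add_of_nonneg_right (by positivity)
  · exact le_add_of_nonneg_left (by positivity)

theorem div_sqrt_mul_eq {c d y : ℝ} (hd : 0 ≤ d) (hy : 0 ≤ y) :
    c / √(d * y) = d ^ (-(1 / 2) : ℝ) * (c * y ^ (-(1 / 2) : ℝ)) := by
  rw [Real.sqrt_mul hd, Real.sqrt_eq_rpow, Real.sqrt_eq_rpow, Real.rpow_neg hd, Real.rpow_neg hy]
  ring

theorem IsBeltrami.norm_Tderiv_sub_le_edgeError {μ ν : ℂ → ℂ} (hμ : IsBeltrami μ)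
    (hν : IsBeltrami ν) (hz : 0 < z.im) (hre : z.re ∈ Ioo a b) (hh : 0 ≤ h) (ht : 0 < t)
    (heq : ∀ ζ : ℂ, ζ.re ∈ Ioo a b → -ζ.im ∈ Ioo h t → μ ζ = ν ζ) :
    ‖Tderiv μ z - Tderiv ν z‖ ≤ edgeError a b h t z := by
  have ha : 0 < z.re - a := sub_pos.2 hre.1
  have hb : 0 < b - z.re := sub_pos.2 hre.2
  have hra : 0 < √((z.re - a) * z.im) := Real.sqrt_pos.2 (mul_pos ha hz)
  have hrb : 0 < √((b - z.re) * z.im) := Real.sqrt_pos.2 (mul_pos hb hz)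
  have hT := hμ.norm_Tderiv_sub_le hν hz hh
    (r := min t (min √((z.re - a) * z.im) √((b - z.re) * z.im)))
    (lt_min ht (lt_min hra hrb)) fun ζ hζ hlt => ?_
  · have hmin := div_min_le_add (c := 8) (by norm_num) ht (lt_min hra hrb)
    have hmin' := div_min_le_add (c := 8) (by norm_num) hra hrb
    rw [div_sqrt_mul_eq ha.le hz.le, div_sqrt_mul_eq hb.le hz.le] at hmin'
    rw [edgeError, Real.rpow_neg hz.le, Real.rpow_two, ← div_eq_mul_inv]
    linarith
  · have hζ0 : ζ.im ≤ 0 := by linarith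
    obtain ⟨hlt_t, hlt_ab⟩ := lt_min_iff.1 hlt
    obtain ⟨hlt_a, hlt_b⟩ := lt_min_iff.1 hlt_ab
    refine heq ζ ⟨?_, ?_⟩ ⟨by linarith, ?_⟩
    · by_contra! hle
      refine hlt_a.not_ge (sqrt_mul_im_le_norm_sub hz.le hζ0 ha.le ?_)
      linarith [neg_le_abs (ζ.re - z.re)]
    · by_contra! hle
      refine hlt_b.not_ge (sqrt_mul_im_le_norm_sub hz.le hζ0 hb.le ?_)
      linarith [le_abs_self (ζ.re - z.re)]
    · have := (neg_le_abs (ζ - z).im).trans (abs_im_le_norm (ζ - z))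
      rw [sub_im] at this
      linarith

theorem integrableOn_Ioo_rpow_of_pos (hh : 0 < h) (r : ℝ) :
    IntegrableOn (fun y : ℝ => y ^ r) (Ioo h t) :=
  (ContinuousOn.integrableOn_compact isCompact_Icc fun _ hy => (Real.continuousAt_rpow_const _ r
    (.inl (hh.trans_le hy.1).ne')).continuousWithinAt).mono_set Ioo_subset_Icc_self

theorem setIntegral_Ioo_rpow_neg_two_le (hh : 0 < h) (t : ℝ) :
    ∫ y in Ioo h t, y ^ (-2 : ℝ) ≤ h⁻¹ := by
  have hint := integrableOn_Ioi_rpow_of_lt (a := -2) (by norm_num) hh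
  have hpos : 0 ≤ᵐ[volume.restrict (Ioi h)] fun y : ℝ => y ^ (-2 : ℝ) :=
    (ae_restrict_mem measurableSet_Ioi).mono fun y hy => Real.rpow_nonneg (hh.trans hy).le _
  calc ∫ y in Ioo h t, y ^ (-2 : ℝ)
      ≤ ∫ y in Ioi h, y ^ (-2 : ℝ) :=
        setIntegral_mono_set hint hpos Ioo_subset_Ioi_self.eventuallyLE
    _ = h⁻¹ := by
        rw [integral_Ioi_rpow_of_lt (by norm_num) hh, show (-2 : ℝ) + 1 = -1 by norm_num,
          Real.rpow_neg_one, neg_div_neg_eq, div_one]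

theorem setIntegral_Ioo_rpow_neg_half_le (hh : 0 < h) (hht : h ≤ t) :
    ∫ y in Ioo h t, y ^ (-(1 / 2) : ℝ) ≤ 2 * √t := by
  have ht : 0 ≤ t := hh.le.trans hht
  have hint := integrableOn_Ioo_sub_right_rpow (r := -(1 / 2)) (by norm_num) ht
  have hval := setIntegral_Ioo_sub_right_rpow (r := -(1 / 2)) (by norm_num) ht
  simp only [sub_zero] at hint hval
  have hpos : 0 ≤ᵐ[volume.restrict (Ioo 0 t)] fun y : ℝ => y ^ (-(1 / 2) : ℝ) :=
    (ae_restrict_mem measurableSet_Ioo).mono fun y hy => Real.rpow_nonneg hy.1.le _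
  refine (setIntegral_mono_set hint hpos (Ioo_subset_Ioo_left hh.le).eventuallyLE).trans_eq ?_
  rw [hval, show -(1 / 2 : ℝ) + 1 = 1 / 2 by norm_num, Real.sqrt_eq_rpow]
  ring

theorem integrableOn_strip_edge (hh : 0 < h) :
    IntegrableOn (fun z : ℂ => 4 * h * z.im ^ (-2 : ℝ) + 8 / t) (Ioo a b ×ℂ Ioo h t) := by
  have hdepth : IntegrableOn (fun y : ℝ => 4 * h * y ^ (-2 : ℝ) + 8 / t) (Ioo h t) :=
    ((integrableOn_Ioo_rpow_of_pos hh _).const_mul _).add (by simp)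
  have hprod := integrableOn_reProdIm_mul (f := fun _ => (1 : ℝ)) (s := Ioo a b) (by simp) hdepth
  simpa only [one_mul] using hprod

theorem integrableOn_lateral_edge (hab : a ≤ b) (hh : 0 < h) :
    IntegrableOn (fun z : ℂ => ((z.re - a) ^ (-(1 / 2) : ℝ) + (b - z.re) ^ (-(1 / 2) : ℝ)) *
      (8 * z.im ^ (-(1 / 2) : ℝ))) (Ioo a b ×ℂ Ioo h t) :=
  integrableOn_reProdIm_mul ((integrableOn_Ioo_sub_right_rpow (by norm_num) hab).add
    (integrableOn_Ioo_sub_left_rpow (by norm_num) hab))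
    ((integrableOn_Ioo_rpow_of_pos hh _).const_mul 8)

theorem setIntegral_strip_edge_le (hab : a ≤ b) (hh : 0 < h) (hht : h ≤ t) :
    ∫ z in Ioo a b ×ℂ Ioo h t, (4 * h * z.im ^ (-2 : ℝ) + 8 / t) ≤ 12 * (b - a) := by
  have ht : 0 < t := hh.trans_le hht
  have hdepth : ∫ y in Ioo h t, (4 * h * y ^ (-2 : ℝ) + 8 / t) ≤ 12 := by
    have hle := mul_le_mul_of_nonneg_left (setIntegral_Ioo_rpow_neg_two_le hh t)
      (by positivity : 0 ≤ 4 * h)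
    have hfrac : (t - h) * (8 / t) ≤ 8 := by
      rw [mul_div_assoc', div_le_iff₀ ht]
      linarith
    rw [mul_inv_cancel_right₀ hh.ne'] at hle
    rw [integral_add ((integrableOn_Ioo_rpow_of_pos hh _).const_mul _) (by simp),
      integral_const_mul, setIntegral_const, Real.volume_real_Ioo_of_le hht, smul_eq_mul]
    linarith
  have hprod := setIntegral_reProdIm_mul (fun _ => 1) (fun y => 4 * h * y ^ (-2 : ℝ) + 8 / t)
    (Ioo a b) (Ioo h t)
  simp only [one_mul] at hprod
  rw [hprod, setIntegral_const, Real.volume_real_Ioo_of_le hab, smul_eq_mul, mul_one, mul_comm]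
  exact mul_le_mul_of_nonneg_right hdepth (sub_nonneg.2 hab)

theorem setIntegral_lateral_edge_le (hh : 0 < h) (hht : h ≤ t) (htb : t ≤ b - a) :
    ∫ z in Ioo a b ×ℂ Ioo h t, ((z.re - a) ^ (-(1 / 2) : ℝ) + (b - z.re) ^ (-(1 / 2) : ℝ)) *
      (8 * z.im ^ (-(1 / 2) : ℝ)) ≤ 64 * (b - a) := by
  have hab : a ≤ b := by linarith
  have hlateral : ∫ x in Ioo a b, ((x - a) ^ (-(1 / 2) : ℝ) + (b - x) ^ (-(1 / 2) : ℝ)) =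
      4 * √(b - a) := by
    rw [integral_add (integrableOn_Ioo_sub_right_rpow (by norm_num) hab)
      (integrableOn_Ioo_sub_left_rpow (by norm_num) hab),
      setIntegral_Ioo_sub_right_rpow (by norm_num) hab,
      setIntegral_Ioo_sub_left_rpow (by norm_num) hab, show -(1 / 2 : ℝ) + 1 = 1 / 2 by norm_num,
      Real.sqrt_eq_rpow]
    ring
  rw [setIntegral_reProdIm_mul (fun x => (x - a) ^ (-(1 / 2) : ℝ) + (b - x) ^ (-(1 / 2) : ℝ))
    fun y => 8 * y ^ (-(1 / 2) : ℝ), hlateral, integral_const_mul]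
  calc 4 * √(b - a) * (8 * ∫ y in Ioo h t, y ^ (-(1 / 2) : ℝ))
      ≤ 4 * √(b - a) * (8 * (2 * √(b - a))) := by
        gcongr
        exact (setIntegral_Ioo_rpow_neg_half_le hh hht).trans (by gcongr)
    _ = 64 * (√(b - a) * √(b - a)) := by ring
    _ = 64 * (b - a) := by rw [Real.mul_self_sqrt (sub_nonneg.2 hab)]

theorem integrableOn_edgeError (hab : a ≤ b) (hh : 0 < h) :
    IntegrableOn (edgeError a b h t) (Ioo a b ×ℂ Ioo h t) :=
  (integrableOn_strip_edge hh).add (integrableOn_lateral_edge hab hh)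

theorem setIntegral_edgeError_le (hh : 0 < h) (hht : h ≤ t) (htb : t ≤ b - a) :
    ∫ z in Ioo a b ×ℂ Ioo h t, edgeError a b h t z ≤ 76 * (b - a) := by
  have hab : a ≤ b := by linarith
  have hstrip := setIntegral_strip_edge_le hab hh hht
  have hlateral := setIntegral_lateral_edge_le hh hht htb
  simp only [edgeError]
  rw [integral_add (integrableOn_strip_edge hh) (integrableOn_lateral_edge hab hh)]
  linarith

end EdgeError

namespace IsBeltrami

variable {μ ν : ℂ → ℂ} {a b h t : ℝ}

theorem integrableOn_blochEnergy_Ioo (hμ : IsBeltrami μ) (hh : 0 < h) :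
    IntegrableOn (blochEnergy (Tderiv μ)) (Ioo a b ×ℂ Ioo h t) :=
  (integrableOn_blochEnergy_Icc hμ.continuousOn_Tderiv hh).mono_set
    (reProdIm_subset_iff.2 (prod_mono Ioo_subset_Icc_self Ioo_subset_Icc_self))

theorem setIntegral_blochEnergy_le_add (hμ : IsBeltrami μ) (hν : IsBeltrami ν) (hh : 0 < h)
    (hht : h ≤ t) (htb : t ≤ b - a)
    (heq : ∀ ζ : ℂ, ζ.re ∈ Ioo a b → -ζ.im ∈ Ioo h t → μ ζ = ν ζ) :
    ∫ z in Ioo a b ×ℂ Ioo h t, blochEnergy (Tderiv μ) z ≤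
      (∫ z in Ioo a b ×ℂ Ioo h t, blochEnergy (Tderiv ν) z) + 2432 * (b - a) := by
  have hedge := integrableOn_edgeError (a := a) (b := b) (t := t) (by linarith) hh
  calc ∫ z in Ioo a b ×ℂ Ioo h t, blochEnergy (Tderiv μ) z
      ≤ ∫ z in Ioo a b ×ℂ Ioo h t, (blochEnergy (Tderiv ν) z + 32 * edgeError a b h t z) := by
        refine setIntegral_mono_on (hμ.integrableOn_blochEnergy_Ioo hh)
          ((hν.integrableOn_blochEnergy_Ioo hh).add (hedge.const_mul 32))
          (measurableSet_reProdIm measurableSet_Ioo measurableSet_Ioo) fun z hz => ?_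
        have hz0 : 0 < z.im := hh.trans hz.2.1
        have hdiff := blochEnergy_sub_le hz0 (hμ.im_mul_norm_Tderiv_le hz0)
          (hν.im_mul_norm_Tderiv_le hz0)
        have hlocal := hμ.norm_Tderiv_sub_le_edgeError hν hz0 hz.1 hh.le (hh.trans_le hht) heq
        linarith
    _ = (∫ z in Ioo a b ×ℂ Ioo h t, blochEnergy (Tderiv ν) z) +
          32 * ∫ z in Ioo a b ×ℂ Ioo h t, edgeError a b h t z := by
        rw [integral_add (hν.integrableOn_blochEnergy_Ioo hh) (hedge.const_mul 32),
          integral_const_mul]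
    _ ≤ (∫ z in Ioo a b ×ℂ Ioo h t, blochEnergy (Tderiv ν) z) + 2432 * (b - a) := by
        linarith [setIntegral_edgeError_le hh hht htb]

end IsBeltrami

/-! ### Affine invariance -/

section Affine

variable {μ ν : ℂ → ℂ} {a p q u v : ℝ}

theorem Tderiv_congr_ae (h : μ =ᵐ[volume] ν) : Tderiv μ = Tderiv ν := by
  funext z
  simp only [Tderiv]
  congr 1
  refine integral_congr_ae (ae_restrict_of_ae ?_)
  filter_upwards [h] with ζ hζ
  rw [hζ]

theorem IsBeltrami.exists_ae_eq_norm_le_one (hμ : IsBeltrami μ) :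
    ∃ ν : ℂ → ℂ, Measurable ν ∧ (∀ ζ, ‖ν ζ‖ ≤ 1) ∧ μ =ᵐ[volume] ν := by
  refine ⟨{ζ | ‖μ ζ‖ ≤ 1}.indicator μ,
    hμ.measurable.indicator (measurableSet_le hμ.measurable.norm measurable_const), fun ζ => ?_, ?_⟩
  · by_cases hζ : ‖μ ζ‖ ≤ 1 <;> simp [hζ]
  · filter_upwards [hμ.norm_le_one] with ζ hζ
    exact (indicator_of_mem (s := {ζ | ‖μ ζ‖ ≤ 1}) hζ μ).symm

theorem preimage_ofReal_mul_add_lowerHalfPlaneSet (ha : 0 < a) (c : ℝ) :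
    (fun ζ : ℂ => a * ζ + c) ⁻¹' lowerHalfPlaneSet = lowerHalfPlaneSet := by
  ext ζ
  simp [mul_neg_iff, ha, ha.not_gt]

theorem preimage_ofReal_mul_add_reProdIm_Ioo (ha : 0 < a) (c : ℝ) :
    (fun z : ℂ => a * z + c) ⁻¹' (Ioo (a * p + c) (a * q + c) ×ℂ Ioo (a * u) (a * v)) =
      Ioo p q ×ℂ Ioo u v := by
  ext z
  simp [mem_reProdIm, ha]

theorem Tderiv_comp_ofReal_mul_add (μ : ℂ → ℂ) (ha : 0 < a) (c : ℝ) (z : ℂ) :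
    Tderiv (fun ω => μ (a * ω + c)) z = a * Tderiv μ (a * z + c) := by
  have ha' : (a : ℂ) ≠ 0 := ofReal_ne_zero.2 ha.ne'
  have hker : ∀ ζ : ℂ, μ (a * ζ + c) / (ζ - z) ^ 3 =
      a ^ 3 * (μ (a * ζ + c) / (a * ζ + c - (a * z + c)) ^ 3) := fun ζ => by
    rw [add_sub_add_right_eq_sub, ← mul_sub, mul_pow]
    field_simp
  have hint := setIntegral_comp_ofReal_mul_add (fun ζ => μ ζ / (ζ - (a * z + c)) ^ 3)
    lowerHalfPlaneSet ha.ne' c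
  rw [preimage_ofReal_mul_add_lowerHalfPlaneSet ha] at hint
  simp only [Tderiv, hker]
  rw [integral_const_mul, hint, real_smul]
  push_cast
  field_simp

theorem blochEnergy_Tderiv_comp_ofReal_mul_add (μ : ℂ → ℂ) (ha : 0 < a) (c : ℝ) (z : ℂ) :
    blochEnergy (Tderiv fun ω => μ (a * ω + c)) z = a * blochEnergy (Tderiv μ) (a * z + c) := by
  simp only [blochEnergy_eq, Tderiv_comp_ofReal_mul_add μ ha, norm_mul,
    Complex.norm_of_nonneg ha.le, add_im, im_ofReal_mul, ofReal_im, add_zero]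
  ring

theorem setIntegral_blochEnergy_Tderiv_comp_ofReal_mul_add (μ : ℂ → ℂ) (ha : 0 < a) (c : ℝ) :
    ∫ z in Ioo p q ×ℂ Ioo u v, blochEnergy (Tderiv fun ω => μ (a * ω + c)) z =
      a⁻¹ * ∫ z in Ioo (a * p + c) (a * q + c) ×ℂ Ioo (a * u) (a * v),
        blochEnergy (Tderiv μ) z := by
  have hint := setIntegral_comp_ofReal_mul_add (blochEnergy (Tderiv μ))
    (Ioo (a * p + c) (a * q + c) ×ℂ Ioo (a * u) (a * v)) ha.ne' c
  rw [preimage_ofReal_mul_add_reProdIm_Ioo ha, smul_eq_mul] at hint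
  simp only [blochEnergy_Tderiv_comp_ofReal_mul_add μ ha]
  rw [integral_const_mul, hint]
  field_simp

end Affine

/-! ### The self-similar coefficient -/

theorem IsBeltrami.ssharpIntegrableAt_of_support_subset {μ : ℂ → ℂ} {z : ℂ} {K : Set ℂ}
    (hμ : IsBeltrami μ) (hK : IsCompact K) (h0 : 0 ∉ K) (hz : z ∉ K)
    (hsupp : Function.support μ ⊆ K) : SsharpIntegrableAt μ z := by
  have hker : ContinuousOn (fun ζ : ℂ => ((ζ - z) ^ 2)⁻¹ - (ζ ^ 2)⁻¹) K := by
    refine ContinuousOn.sub (ContinuousOn.inv₀ (by fun_prop) fun ζ hζ => ?_)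
      (ContinuousOn.inv₀ (by fun_prop) fun ζ hζ => ?_)
    · exact pow_ne_zero 2 (sub_ne_zero.2 fun h => hz (h ▸ hζ))
    · exact pow_ne_zero 2 fun h => h0 (h ▸ hζ)
  have hint := (hker.integrableOn_compact hK).integrable.bdd_mul
    hμ.measurable.aestronglyMeasurable (ae_restrict_of_ae hμ.norm_le_one)
  refine (IntegrableOn.integrable_of_forall_notMem_eq_zero hint fun ζ hζ => ?_).integrableOn
  rw [Function.notMem_support.1 fun h => hζ (hsupp h), zero_mul]

/-- The scale `m ^ k` of the layer `β / m ^ (k + 1) < v ≤ β / m ^ k` of depths. -/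
noncomputable def layerScale (m : ℕ) (β v : ℝ) : ℝ := (m : ℝ) ^ ⌊Real.logb m (β / v)⌋

/-- The self-similar coefficient: on the layer `β / m ^ (k + 1) < -Im ζ ≤ β / m ^ k` it repeats,
with horizontal period `1 / m ^ k`, the rescaled restriction of `μ` to `[0, 1) × [-β, -β / m)`.
It is cut off to `1 / m ≤ Re ζ ≤ 1`, away from the singularity at `0` of the kernel of `S^#`. -/
noncomputable def selfSimilar (m : ℕ) (β : ℝ) (μ : ℂ → ℂ) : ℂ → ℂ :=
  (Icc (m : ℝ)⁻¹ 1 ×ℂ Ico (-1) 0).indicator fun ζ =>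
    μ (Int.fract (layerScale m β (-ζ.im) * ζ.re) + layerScale m β (-ζ.im) * ζ.im * I)

/-- The `j`-th tile of generation `k`: a copy of `(0, 1) × (β / m, β)` scaled by `1 / m ^ k`. -/
def layerTile (m : ℕ) (β : ℝ) (k j : ℕ) : Set ℂ :=
  Ioo (j / (m : ℝ) ^ k) ((j + 1) / (m : ℝ) ^ k) ×ℂ Ioo (β / (m : ℝ) ^ (k + 1)) (β / (m : ℝ) ^ k)

section SelfSimilar

variable {m k j : ℕ} {β v x : ℝ} {μ : ℂ → ℂ}

theorem floor_logb_div_eq (hm : 2 ≤ m) (hβ : 0 < β)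
    (hv : v ∈ Ioo (β / (m : ℝ) ^ (k + 1)) (β / (m : ℝ) ^ k)) : ⌊Real.logb m (β / v)⌋ = k := by
  have hm1 : (1 : ℝ) < m := by exact_mod_cast hm
  have hv0 : 0 < v := lt_trans (by positivity) hv.1
  rw [Int.floor_eq_iff]
  constructor
  · rw [Int.cast_natCast, Real.le_logb_iff_rpow_le hm1 (by positivity), Real.rpow_natCast]
    exact (le_div_comm₀ (by positivity) hv0).2 hv.2.le
  · rw [Int.cast_natCast, Real.logb_lt_iff_lt_rpow hm1 (by positivity), ← Nat.cast_succ,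
      Real.rpow_natCast]
    exact (div_lt_comm₀ (by positivity) hv0).1 hv.1

theorem floor_mul_eq_of_mem_Ioo {N : ℝ} (hN : 0 < N) (hx : x ∈ Ioo (j / N) ((j + 1) / N)) :
    ⌊N * x⌋ = j := by
  rw [Int.floor_eq_iff, Int.cast_natCast, mul_comm]
  exact ⟨((div_lt_iff₀ hN).1 hx.1).le, (lt_div_iff₀ hN).1 hx.2⟩

open scoped Function in
theorem pairwise_disjoint_layerTile (hm : 2 ≤ m) (hβ : 0 < β) :
    Pairwise (Disjoint on fun p : Σ _ : ℕ, ℕ => layerTile m β p.1 p.2) := by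
  rintro ⟨k, j⟩ ⟨k', j'⟩ hne
  refine disjoint_left.2 fun z hz hz' => hne ?_
  have hk : k = k' := by
    exact_mod_cast (floor_logb_div_eq hm hβ hz.2).symm.trans (floor_logb_div_eq hm hβ hz'.2)
  subst hk
  have hN : (0 : ℝ) < (m : ℝ) ^ k := by positivity
  have hj : j = j' := by
    exact_mod_cast (floor_mul_eq_of_mem_Ioo hN hz.1).symm.trans (floor_mul_eq_of_mem_Ioo hN hz'.1)
  rw [hj]

theorem measurableSet_layerTile (m : ℕ) (β : ℝ) (k j : ℕ) : MeasurableSet (layerTile m β k j) :=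
  measurableSet_reProdIm measurableSet_Ioo measurableSet_Ioo

theorem layerTile_subset (hm : 2 ≤ m) (hβ : β ∈ Ioc 0 1)
    (hj : j ∈ Finset.Ico (m ^ k) (m ^ (k + 1))) :
    layerTile m β (k + 1) j ⊆ Icc (m : ℝ)⁻¹ 1 ×ℂ Ioc (β / (m : ℝ) ^ (k + 2)) 1 := by
  obtain ⟨hβ0, hβ1⟩ := hβ
  obtain ⟨hj0, hj1⟩ := Finset.mem_Ico.1 hj
  have hm1 : (1 : ℝ) ≤ m := by exact_mod_cast one_le_two.trans hm
  have hlow : (m : ℝ)⁻¹ ≤ j / (m : ℝ) ^ (k + 1) := by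
    rw [le_div_iff₀ (by positivity), pow_succ', inv_mul_cancel_left₀ (by positivity)]
    exact_mod_cast hj0
  have hhigh : (j + 1) / (m : ℝ) ^ (k + 1) ≤ 1 :=
    div_le_one_of_le₀ (by exact_mod_cast hj1) (by positivity)
  have hdepth : β / (m : ℝ) ^ (k + 1) ≤ 1 :=
    (div_le_self hβ0.le (one_le_pow₀ hm1)).trans hβ1
  exact fun z hz => ⟨⟨hlow.trans hz.1.1.le, hz.1.2.le.trans hhigh⟩, hz.2.1, hz.2.2.le.trans hdepth⟩

theorem selfSimilar_eq_of_mem_layerTile (hm : 2 ≤ m) (hβ : β ∈ Ioc 0 1)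
    (hj : j ∈ Finset.Ico (m ^ k) (m ^ (k + 1))) (μ : ℂ → ℂ) {ζ : ℂ}
    (hζ : conj ζ ∈ layerTile m β (k + 1) j) :
    selfSimilar m β μ ζ = μ (((m : ℝ) ^ (k + 1) : ℝ) * ζ + (-j : ℝ)) := by
  have hbox := layerTile_subset hm hβ hj hζ
  rw [layerTile, mem_reProdIm, conj_re, conj_im] at hζ
  rw [mem_reProdIm, conj_re, conj_im] at hbox
  have him : ζ.im < 0 := neg_pos.1 ((div_pos hβ.1 (by positivity)).trans hbox.2.1)
  have hmem : ζ ∈ Icc (m : ℝ)⁻¹ 1 ×ℂ Ico (-1) 0 := ⟨hbox.1, neg_le.1 hbox.2.2, him⟩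
  have hscale : layerScale m β (-ζ.im) = (m : ℝ) ^ (k + 1) := by
    rw [layerScale, floor_logb_div_eq hm hβ.1 hζ.2, zpow_natCast]
  rw [selfSimilar, indicator_of_mem hmem, hscale, Int.fract,
    floor_mul_eq_of_mem_Ioo (by positivity) hζ.1]
  congr 1
  apply Complex.ext <;> simp <;> ring

theorem measurable_layerScale (m : ℕ) (β : ℝ) : Measurable (layerScale m β) :=
  (measurable_of_countable fun k : ℤ => (m : ℝ) ^ k).comp
    (((Real.measurable_log.comp (measurable_id.const_div β)).div_const _).floor)

theorem isBeltrami_selfSimilar (hμ : Measurable μ) (hμ1 : ∀ ζ, ‖μ ζ‖ ≤ 1) (m : ℕ) (β : ℝ) :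
    IsBeltrami (selfSimilar m β μ) := by
  have hscale : Measurable fun ζ : ℂ => layerScale m β (-ζ.im) :=
    (measurable_layerScale m β).comp measurable_im.neg
  refine ⟨(hμ.comp ?_).indicator (measurableSet_reProdIm measurableSet_Icc measurableSet_Ico),
    .of_forall fun ζ => ?_⟩
  · exact (measurable_ofReal.comp (hscale.mul measurable_re).fract).add
      (((measurable_ofReal.comp hscale).mul (measurable_ofReal.comp measurable_im)).mul_const I)
  · exact (norm_indicator_le_norm_self _ _).trans (hμ1 _)

theorem selfSimilar_eq_zero_of_im_nonneg (m : ℕ) (β : ℝ) (μ : ℂ → ℂ) {ζ : ℂ} (hζ : 0 ≤ ζ.im) :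
    selfSimilar m β μ ζ = 0 :=
  indicator_of_notMem (fun h => hζ.not_gt h.2.2) _

theorem ssharpIntegrableAt_selfSimilar (hμ : Measurable μ) (hμ1 : ∀ ζ, ‖μ ζ‖ ≤ 1) (hm : 2 ≤ m)
    (β : ℝ) {z : ℂ} (hz : 0 < z.im) : SsharpIntegrableAt (selfSimilar m β μ) z := by
  refine (isBeltrami_selfSimilar hμ hμ1 m β).ssharpIntegrableAt_of_support_subset
    (isCompact_Icc.reProdIm isCompact_Icc : IsCompact (Icc (m : ℝ)⁻¹ 1 ×ℂ Icc (-1) 0))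
    (fun h => ?_) (fun h => hz.not_ge h.2.2) ?_
  · exact (inv_pos.2 (by positivity : (0 : ℝ) < m)).not_ge h.1.1
  · exact support_indicator_subset.trans
      (reProdIm_subset_iff.2 (prod_mono subset_rfl Ico_subset_Icc_self))

end SelfSimilar

/-! ### Comparison of one box with the asymptotic variance -/

section Comparison

variable {m k j : ℕ} {β : ℝ} {μ : ℂ → ℂ}

theorem setIntegral_layerTile_blochEnergy_comp (μ : ℂ → ℂ) (hm : 0 < m) (β : ℝ) (k j : ℕ) :
    ∫ z in layerTile m β k j, blochEnergy (Tderiv fun ω => μ (((m : ℝ) ^ k : ℝ) * ω + (-j : ℝ))) z =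
      ((m : ℝ) ^ k)⁻¹ * ∫ z in Ioo 0 1 ×ℂ Ioo (β / m) β, blochEnergy (Tderiv μ) z := by
  have hleft : (m : ℝ) ^ k * (j / (m : ℝ) ^ k) + -j = 0 := by
    field_simp
    ring
  have hright : (m : ℝ) ^ k * ((j + 1) / (m : ℝ) ^ k) + -j = 1 := by
    field_simp
    ring
  have hbottom : (m : ℝ) ^ k * (β / (m : ℝ) ^ (k + 1)) = β / m := by
    rw [pow_succ]
    field_simp
  have htop : (m : ℝ) ^ k * (β / (m : ℝ) ^ k) = β := by
    field_simp
  rw [layerTile, setIntegral_blochEnergy_Tderiv_comp_ofReal_mul_add μ (by positivity), hleft,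
    hright, hbottom, htop]

theorem inv_mul_setIntegral_sub_le_setIntegral_layerTile (hμ : Measurable μ)
    (hμ1 : ∀ ζ, ‖μ ζ‖ ≤ 1) (hm : 2 ≤ m) (hβ : β ∈ Ioc 0 1)
    (hj : j ∈ Finset.Ico (m ^ k) (m ^ (k + 1))) :
    ((m : ℝ) ^ (k + 1))⁻¹ *
        ((∫ z in Ioo 0 1 ×ℂ Ioo (β / m) β, blochEnergy (Tderiv μ) z) - 2432) ≤
      ∫ z in layerTile m β (k + 1) j, blochEnergy (Tderiv (selfSimilar m β μ)) z := by
  have hβ0 := hβ.1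
  have hm1 : (1 : ℝ) ≤ m := by exact_mod_cast one_le_two.trans hm
  have hscaled : IsBeltrami fun ω => μ (((m : ℝ) ^ (k + 1) : ℝ) * ω + (-j : ℝ)) :=
    ⟨hμ.comp (by fun_prop), .of_forall fun _ => hμ1 _⟩
  have hwidth : ((j : ℝ) + 1) / (m : ℝ) ^ (k + 1) - j / (m : ℝ) ^ (k + 1) =
      ((m : ℝ) ^ (k + 1))⁻¹ := by ring
  have hnarrow : β / (m : ℝ) ^ (k + 1 + 1) ≤ β / (m : ℝ) ^ (k + 1) := by
    gcongr
    exact Nat.le_succ _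
  have hwide : β / (m : ℝ) ^ (k + 1) ≤ (j + 1) / (m : ℝ) ^ (k + 1) - j / (m : ℝ) ^ (k + 1) := by
    rw [hwidth, div_eq_mul_inv]
    exact mul_le_of_le_one_left (by positivity) hβ.2
  have hlocal := hscaled.setIntegral_blochEnergy_le_add (isBeltrami_selfSimilar hμ hμ1 m β)
    (by positivity) hnarrow hwide
    fun ζ hre him => (selfSimilar_eq_of_mem_layerTile hm hβ hj μ ⟨hre, him⟩).symm
  rw [← layerTile, setIntegral_layerTile_blochEnergy_comp μ (by lia), hwidth] at hlocal
  linarith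

theorem one_sub_inv_mul_le_sum_setIntegral_layerTile (hμ : Measurable μ)
    (hμ1 : ∀ ζ, ‖μ ζ‖ ≤ 1) (hm : 2 ≤ m) (hβ : β ∈ Ioc 0 1) (k : ℕ) :
    (1 - (m : ℝ)⁻¹) *
        ((∫ z in Ioo 0 1 ×ℂ Ioo (β / m) β, blochEnergy (Tderiv μ) z) - 2432) ≤
      ∑ j ∈ Finset.Ico (m ^ k) (m ^ (k + 1)),
        ∫ z in layerTile m β (k + 1) j, blochEnergy (Tderiv (selfSimilar m β μ)) z := by
  refine le_of_eq_of_le ?_ (Finset.sum_le_sum fun j hj =>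
    inv_mul_setIntegral_sub_le_setIntegral_layerTile hμ hμ1 hm hβ hj)
  rw [Finset.sum_const, Nat.card_Ico, nsmul_eq_mul,
    Nat.cast_sub (Nat.pow_le_pow_right (by lia) (Nat.le_add_right k 1)), ← mul_assoc]
  congr 1
  push_cast
  rw [pow_succ]
  field_simp

theorem biUnion_layerTile_subset (hm : 2 ≤ m) (hβ : β ∈ Ioc 0 1) (M : ℕ) :
    ⋃ p ∈ (Finset.range M).sigma fun k => Finset.Ico (m ^ k) (m ^ (k + 1)),
        layerTile m β (p.1 + 1) p.2 ⊆
      Icc 0 1 ×ℂ Icc (β / (m : ℝ) ^ (M + 1)) 1 := by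
  have hm1 : (1 : ℝ) ≤ m := by exact_mod_cast one_le_two.trans hm
  refine iUnion₂_subset fun p hp => ?_
  rw [Finset.mem_sigma, Finset.mem_range] at hp
  refine (layerTile_subset hm hβ hp.2).trans (reProdIm_subset_iff.2 (prod_mono
    (Icc_subset_Icc_left (by positivity)) (Ioc_subset_Icc_self.trans (Icc_subset_Icc_left ?_))))
  exact div_le_div_of_nonneg_left hβ.1.le (by positivity) (pow_le_pow_right₀ hm1 (by lia))

theorem natCast_mul_le_setIntegral_selfSimilar (hμ : Measurable μ) (hμ1 : ∀ ζ, ‖μ ζ‖ ≤ 1)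
    (hm : 2 ≤ m) (hβ : β ∈ Ioc 0 1) (M : ℕ) :
    M * ((1 - (m : ℝ)⁻¹) *
        ((∫ z in Ioo 0 1 ×ℂ Ioo (β / m) β, blochEnergy (Tderiv μ) z) - 2432)) ≤
      ∫ z in Icc 0 1 ×ℂ Icc (β / (m : ℝ) ^ (M + 1)) 1,
        blochEnergy (Tderiv (selfSimilar m β μ)) z := by
  have hβ0 := hβ.1
  have hν := isBeltrami_selfSimilar hμ hμ1 m β
  set tiles : Finset (Σ _ : ℕ, ℕ) :=
    (Finset.range M).sigma fun k => Finset.Ico (m ^ k) (m ^ (k + 1)) with htiles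
  have hdisj : (tiles : Set (Σ _ : ℕ, ℕ)).PairwiseDisjoint fun p => layerTile m β (p.1 + 1) p.2 :=
    fun p _ q _ hpq => pairwise_disjoint_layerTile hm hβ0 (i := ⟨p.1 + 1, p.2⟩)
      (j := ⟨q.1 + 1, q.2⟩) fun h => hpq (by
        simp only [Sigma.mk.injEq, Nat.add_right_cancel_iff, heq_eq_eq] at h
        exact Sigma.ext h.1 (heq_of_eq h.2))
  calc _ = ∑ k ∈ Finset.range M, (1 - (m : ℝ)⁻¹) *
        ((∫ z in Ioo 0 1 ×ℂ Ioo (β / m) β, blochEnergy (Tderiv μ) z) - 2432) := by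
        rw [Finset.sum_const, Finset.card_range, nsmul_eq_mul]
    _ ≤ ∑ p ∈ tiles, ∫ z in layerTile m β (p.1 + 1) p.2,
        blochEnergy (Tderiv (selfSimilar m β μ)) z := by
        rw [htiles, Finset.sum_sigma]
        exact Finset.sum_le_sum fun k _ =>
          one_sub_inv_mul_le_sum_setIntegral_layerTile hμ hμ1 hm hβ k
    _ = ∫ z in ⋃ p ∈ tiles, layerTile m β (p.1 + 1) p.2,
        blochEnergy (Tderiv (selfSimilar m β μ)) z :=
        (integral_biUnion_finset tiles (fun p _ => measurableSet_layerTile m β _ _) hdisj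
          fun p _ => hν.integrableOn_blochEnergy_Ioo (by positivity)).symm
    _ ≤ _ := by
        refine setIntegral_mono_set
          (integrableOn_blochEnergy_Icc hν.continuousOn_Tderiv (by positivity)) ?_
          (biUnion_layerTile_subset hm hβ M).eventuallyLE
        filter_upwards [ae_restrict_mem (measurableSet_reProdIm measurableSet_Icc
          measurableSet_Icc)] with z hz
        exact blochEnergy_nonneg (le_trans (by positivity) hz.2.1)

theorem tendsto_div_pow_succ_nhdsGT_zero (hm : 2 ≤ m) (hβ : 0 < β) :
    Tendsto (fun M : ℕ => β / (m : ℝ) ^ (M + 1)) atTop (𝓝[>] 0) := by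
  have hm1 : (1 : ℝ) < m := by exact_mod_cast hm
  refine tendsto_nhdsWithin_iff.2 ⟨?_, .of_forall fun M => div_pos hβ (by positivity)⟩
  exact ((tendsto_pow_atTop_atTop_of_one_lt hm1).comp (tendsto_add_atTop_nat 1)).const_div_atTop β

theorem one_sub_inv_mul_setIntegral_sub_le_SigmaSqH_mul_log (hμ : Measurable μ)
    (hμ1 : ∀ ζ, ‖μ ζ‖ ≤ 1) (hm : 2 ≤ m) (hβ : β ∈ Ioc 0 1) :
    (1 - (m : ℝ)⁻¹) *
        ((∫ z in Ioo 0 1 ×ℂ Ioo (β / m) β, blochEnergy (Tderiv μ) z) - 2432) ≤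
      SigmaSqH * Real.log m := by
  have hβ0 := hβ.1
  have hlog : 0 < Real.log m := Real.log_pos (by exact_mod_cast hm)
  have hν := isBeltrami_selfSimilar hμ hμ1 m β
  have henergy := natCast_mul_le_setIntegral_selfSimilar hμ hμ1 hm hβ
  set gain := (1 - (m : ℝ)⁻¹) *
    ((∫ z in Ioo 0 1 ×ℂ Ioo (β / m) β, blochEnergy (Tderiv μ) z) - 2432)
  rw [← div_le_iff₀ hlog]
  refine le_trans ?_ (hν.sigma01_Ssharp_le_SigmaSqH fun ζ => selfSimilar_eq_zero_of_im_nonneg m β μ)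
  refine hν.isBloch_Ssharp.le_sigma01 (C := gain - gain / Real.log m * Real.log β)
    ((tendsto_div_pow_succ_nhdsGT_zero hm hβ0).frequently (.of_forall fun M => ?_))
  have hderiv : EqOn (blochEnergy (deriv (Ssharp (selfSimilar m β μ))))
      (blochEnergy (Tderiv (selfSimilar m β μ)))
      (Icc 0 1 ×ℂ Icc (β / (m : ℝ) ^ (M + 1)) 1) := fun z hz => by
    have hz0 : 0 < z.im := lt_of_lt_of_le (by positivity) hz.2.1
    simp only [blochEnergy, (hν.hasDerivAt_Ssharp hz0
      (ssharpIntegrableAt_selfSimilar hμ hμ1 hm β hz0)).deriv]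
  have hlogM : Real.log (1 / (β / (m : ℝ) ^ (M + 1))) = (M + 1) * Real.log m - Real.log β := by
    rw [one_div_div, Real.log_div (by positivity) hβ0.ne', Real.log_pow, Nat.cast_succ]
  rw [setIntegral_congr_fun (measurableSet_reProdIm measurableSet_Icc measurableSet_Icc) hderiv]
  refine le_of_eq_of_le ?_ (henergy M)
  rw [hlogM]
  field_simp
  ring

theorem setIntegral_blochEnergy_Tderiv_le_mul_log (hμ : IsBeltrami μ) {n : ℝ} (hn : 1 ≤ n)
    (hβ : 0 < β) :
    ∫ z in Ioo 0 1 ×ℂ Ioo (β / n) β, blochEnergy (Tderiv μ) z ≤ 64 * Real.log n := by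
  have hclosed := setIntegral_blochEnergy_le hμ.continuousOn_Tderiv
    (fun _ => hμ.im_mul_norm_Tderiv_le) zero_le_one (by positivity) (div_le_self hβ.le hn)
  rw [setIntegral_congr_set (reProdIm_Ioo_ae_eq_Icc _ _ _ _)]
  convert hclosed using 1
  rw [div_div_cancel₀ hβ.ne']
  ring

theorem setIntegral_blochEnergy_le_SigmaSqH_mul_log_natCast (hμ : Measurable μ)
    (hμ1 : ∀ ζ, ‖μ ζ‖ ≤ 1) (hm : 2 ≤ m) (hβ : β ∈ Ioc 0 1) :
    ∫ z in Ioo 0 1 ×ℂ Ioo (β / m) β, blochEnergy (Tderiv μ) z ≤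
      SigmaSqH * Real.log m + 2496 := by
  have hm0 : (0 : ℝ) < m := by positivity
  have hself := one_sub_inv_mul_setIntegral_sub_le_SigmaSqH_mul_log hμ hμ1 hm hβ
  have hcrude := setIntegral_blochEnergy_Tderiv_le_mul_log ⟨hμ, .of_forall hμ1⟩ (n := m)
    (by exact_mod_cast one_le_two.trans hm) hβ.1
  set X := ∫ z in Ioo 0 1 ×ℂ Ioo (β / m) β, blochEnergy (Tderiv μ) z
  have hloss : (m : ℝ)⁻¹ * X ≤ 64 := by
    rw [inv_mul_le_iff₀ hm0]
    linarith [Real.log_le_self hm0.le]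
  linarith [inv_pos.2 hm0]

theorem setIntegral_blochEnergy_le_SigmaSqH_mul_log (hμ : Measurable μ) (hμ1 : ∀ ζ, ‖μ ζ‖ ≤ 1)
    (hβ : β ∈ Ioc 0 1) {n : ℝ} (hn : 2 ≤ n) :
    ∫ z in Ioo 0 1 ×ℂ Ioo (β / n) β, blochEnergy (Tderiv μ) z ≤
      SigmaSqH * Real.log n + 2561 := by
  have hβ0 := hβ.1
  have hn0 : 0 < n := two_pos.trans_le hn
  have hceil : n ≤ ⌈n⌉₊ := Nat.le_ceil n
  have hm : 2 ≤ ⌈n⌉₊ := by exact_mod_cast hn.trans hceil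
  have hsub : (Ioo 0 1 ×ℂ Ioo (β / n) β : Set ℂ) ⊆ Ioo 0 1 ×ℂ Ioo (β / ⌈n⌉₊) β :=
    reProdIm_subset_iff.2 (prod_mono subset_rfl (Ioo_subset_Ioo_left (by gcongr)))
  have hmono : ∫ z in Ioo 0 1 ×ℂ Ioo (β / n) β, blochEnergy (Tderiv μ) z ≤
      ∫ z in Ioo 0 1 ×ℂ Ioo (β / ⌈n⌉₊) β, blochEnergy (Tderiv μ) z := by
    refine setIntegral_mono_set (IsBeltrami.integrableOn_blochEnergy_Ioo ⟨hμ, .of_forall hμ1⟩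
      (by positivity)) ?_ hsub.eventuallyLE
    filter_upwards [ae_restrict_mem (measurableSet_reProdIm measurableSet_Ioo
      measurableSet_Ioo)] with z hz
    exact blochEnergy_nonneg (le_trans (by positivity) hz.2.1.le)
  have hlog : Real.log ⌈n⌉₊ ≤ Real.log n + 1 := by
    have htwice : (⌈n⌉₊ : ℝ) ≤ 2 * n := by linarith [Nat.ceil_lt_add_one hn0.le]
    have := Real.log_le_log (by positivity) htwice
    rw [Real.log_mul two_ne_zero hn0.ne'] at this
    linarith [Real.log_two_lt_d9]
  have hlog' : Real.log n ≤ Real.log ⌈n⌉₊ := Real.log_le_log hn0 hceil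
  have hSigma : SigmaSqH * (Real.log ⌈n⌉₊ - Real.log n) ≤ 65 * 1 := by
    refine mul_le_mul SigmaSqH_le ?_ ?_ ?_ <;> linarith
  linarith [setIntegral_blochEnergy_le_SigmaSqH_mul_log_natCast hμ hμ1 hm hβ]

end Comparison

theorem IsBeltrami.setIntegral_blochEnergy_le_mul_SigmaSqH_mul_log {μ : ℂ → ℂ} {n α t : ℝ}
    (hμ : IsBeltrami μ) (hn : 2 ≤ n) (hα : 1 ≤ α) (ht : 0 < t) (x₀ : ℝ) :
    ∫ z in Icc x₀ (x₀ + α * t) ×ℂ Icc (t / n) t, blochEnergy (Tderiv μ) z ≤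
      α * t * (SigmaSqH * Real.log n + 2561) := by
  obtain ⟨ν, hν, hν1, hμν⟩ := hμ.exists_ae_eq_norm_le_one
  have hα0 : 0 < α := one_pos.trans_le hα
  have hscale := setIntegral_blochEnergy_Tderiv_comp_ofReal_mul_add ν
    (p := 0) (q := 1) (u := α⁻¹ / n) (v := α⁻¹) (mul_pos hα0 ht) x₀
  have hleft : α * t * 0 + x₀ = x₀ := by ring
  have hright : α * t * 1 + x₀ = x₀ + α * t := by ring
  have hbottom : α * t * (α⁻¹ / n) = t / n := by field_simp
  have htop : α * t * α⁻¹ = t := by field_simp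
  rw [hleft, hright, hbottom, htop] at hscale
  rw [Tderiv_congr_ae hμν, ← setIntegral_congr_set (reProdIm_Ioo_ae_eq_Icc _ _ _ _),
    ← inv_mul_le_iff₀ (by positivity), ← hscale]
  exact setIntegral_blochEnergy_le_SigmaSqH_mul_log (hν.comp (by fun_prop)) (fun _ => hν1 _)
    ⟨inv_pos.2 hα0, inv_le_one_of_one_le₀ hα⟩ hn

theorem stmt1 : ∃ C : ℝ, 0 < C ∧ ∀ μ : ℂ → ℂ, Measurable μ →
    (∀ᵐ ζ : ℂ, ‖μ ζ‖ ≤ 1) → (∀ ζ : ℂ, 0 ≤ ζ.im → μ ζ = 0) →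
    ∀ n : ℝ, 2 ≤ n → ∀ α : ℝ, 1 ≤ α → ∀ x₀ t : ℝ, 0 < t →
    (∫ z in {z : ℂ | z.re ∈ Set.Icc x₀ (x₀ + α * t) ∧ z.im ∈ Set.Icc (t / n) t},
        (2 * z.im * ‖Tderiv μ z‖)^2 / z.im) / (α * t * Real.log n)
      ≤ SigmaSqH + C / Real.log n := by
  refine ⟨2561, by norm_num, fun μ hμ hμ1 _ n hn α hα x₀ t ht => ?_⟩
  have hlog : 0 < Real.log n := Real.log_pos (one_lt_two.trans_le hn)
  have hbox := (IsBeltrami.mk hμ hμ1).setIntegral_blochEnergy_le_mul_SigmaSqH_mul_log hn hα ht x₀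
  rw [div_le_iff₀ (by positivity)]
  refine hbox.trans_eq ?_
  field_simp
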